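/- arXiv:2202.07047 — 3 statements merged into one kernel-verified Lean document; each statement's English description precedes it below -/
import Mathlib

section
/- Fix real P_t > 0, an integer G ≥ 1, and c > 0. Let (g_{i,j})_{i,j≥1} be a doubly-indexed i.i.d. array of standard complex Gaussian random variables, for each L ≥ 1 set Q_L = ⌈cL⌉, and let h_1,…,h_{Q_L} ∈ ℂ^L be the rows of the Q_L×L matrix (g_{i,j})_{1≤i≤Q_L,1≤j≤L}. Fix k and define the random variables X_L = (P_t/(G·Q_L·L))·‖h_k‖⁴ and Y_L = 1 + (P_t/(G·Q_L·L))·Σ_{ϑ≠k, 1≤ϑ≤Q_L} |h_k^T h_ϑ^*|². Then lim_{L→∞} E[ln(1 + X_L/Y_L)] = ln(1 + (1/c)·P_t/(P_t + G)). Consequently, the MF-based average sum-rate R̄^{MF}(G, cL) = c·G·L·E[ln(1 + X_L/Y_L)] satisfies R̄^{MF}(G, cL)/(c·G·L) → ln(1 + (1/c)·P_t/(P_t + G)) as L → ∞. -/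
open MeasureTheory ProbabilityTheory
open scoped NNReal

/-- A family `g i` of complex random variables is i.i.d. standard complex Gaussian if the
real and imaginary parts of all its members form a jointly independent family of real
random variables, each distributed as `gaussianReal 0 (1/2)`. -/
def IsStdComplexGaussianFamily {Ω ι : Type*} [MeasurableSpace Ω] (P : Measure Ω)
    (g : ι → Ω → ℂ) : Prop :=
  iIndepFun (m := fun _ : ι × Bool => (inferInstance : MeasurableSpace ℝ))
      (fun p ω => if p.2 then (g p.1 ω).re else (g p.1 ω).im) P ∧
  ∀ p : ι × Bool,
    Measure.map (fun ω => if p.2 then (g p.1 ω).re else (g p.1 ω).im) P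
      = gaussianReal 0 (1 / 2 : ℝ≥0)

namespace MF
open scoped ENNReal
variable {Ω : Type*} [MeasurableSpace Ω] {P : Measure Ω}

/-- all finite moments -/
def AllLp {E : Type*} [NormedAddCommGroup E] (P : Measure Ω) (f : Ω → E) : Prop :=
  ∀ p : ℝ≥0∞, p ≠ ∞ → MemLp f p P

lemma AllLp.add {E : Type*} [NormedAddCommGroup E] {f h : Ω → E} (hf : AllLp P f)
    (hh : AllLp P h) : AllLp P (fun ω => f ω + h ω) := fun p hp => (hf p hp).add (hh p hp)

lemma AllLp.sub {E : Type*} [NormedAddCommGroup E] {f h : Ω → E} (hf : AllLp P f)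
    (hh : AllLp P h) : AllLp P (fun ω => f ω - h ω) := fun p hp => (hf p hp).sub (hh p hp)

lemma AllLp.sum {E ι : Type*} [NormedAddCommGroup E] {f : ι → Ω → E} (s : Finset ι)
    (hf : ∀ i ∈ s, AllLp P (f i)) : AllLp P (fun ω => ∑ i ∈ s, f i ω) := fun p hp =>
  memLp_finsetSum s (fun i hi => hf i hi p hp)

lemma AllLp.const {E : Type*} [NormedAddCommGroup E] [IsFiniteMeasure P] (c : E) :
    AllLp P (fun _ : Ω => c) := fun _ _ => memLp_const c

lemma AllLp.mul {𝕜 : Type*} [RCLike 𝕜] {f h : Ω → 𝕜} (hf : AllLp P f)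
    (hh : AllLp P h) : AllLp P (fun ω => f ω * h ω) := fun p hp => by
  have : ENNReal.HolderTriple (2 * p) (2 * p) p := ⟨by
    rw [ENNReal.mul_inv (by simp) (by simp), ← two_mul, ← mul_assoc,
      ENNReal.mul_inv_cancel (by simp) (by simp), one_mul]⟩
  have h2 : 2 * p ≠ ∞ := ENNReal.mul_ne_top (by simp) hp
  exact MemLp.mul' (hh _ h2) (hf _ h2)

lemma AllLp.pow {𝕜 : Type*} [RCLike 𝕜] [IsFiniteMeasure P] {f : Ω → 𝕜} (hf : AllLp P f) (n : ℕ) :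
    AllLp P (fun ω => f ω ^ n) := by
  induction n with
  | zero => simpa using AllLp.const (1 : 𝕜)
  | succ n ih => simpa [pow_succ] using ih.mul hf

lemma AllLp.re {f : Ω → ℂ} (hf : AllLp P f) : AllLp P (fun ω => (f ω).re) :=
  fun p hp => (hf p hp).re

lemma AllLp.im {f : Ω → ℂ} (hf : AllLp P f) : AllLp P (fun ω => (f ω).im) :=
  fun p hp => (hf p hp).im

lemma AllLp.conj {f : Ω → ℂ} (hf : AllLp P f) : AllLp P (fun ω => (starRingEnd ℂ) (f ω)) :=
  fun p hp => (hf p hp).star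

lemma AllLp.ofReal {f : Ω → ℝ} (hf : AllLp P f) : AllLp P (fun ω => (f ω : ℂ)) :=
  fun p hp => (hf p hp).ofReal

lemma AllLp.normSq {f : Ω → ℂ} (hf : AllLp P f) : AllLp P (fun ω => Complex.normSq (f ω)) := by
  simp only [Complex.normSq_apply]
  exact (hf.re.mul hf.re).add (hf.im.mul hf.im)

lemma AllLp.abs {f : Ω → ℝ} (hf : AllLp P f) : AllLp P (fun ω => |f ω|) :=
  fun p hp => (hf p hp).abs

lemma AllLp.int {E : Type*} [NormedAddCommGroup E] {f : Ω → E} (hf : AllLp P f) :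
    Integrable f P := memLp_one_iff_integrable.1 (hf 1 (by simp))

lemma AllLp.aesm {E : Type*} [NormedAddCommGroup E] {f : Ω → E} (hf : AllLp P f) :
    AEStronglyMeasurable f P := (hf 1 (by simp)).1

/-- sigma-algebra of a block -/
@[reducible]
def sig (g : ℕ → ℕ → Ω → ℂ) (S : Set (ℕ × ℕ)) : MeasurableSpace Ω :=
  ⨆ q ∈ {q : (ℕ × ℕ) × Bool | q.1 ∈ S}, MeasurableSpace.comap
    (fun ω => if q.2 then (g q.1.1 q.1.2 ω).re else (g q.1.1 q.1.2 ω).im) inferInstance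

lemma meas_sig (g : ℕ → ℕ → Ω → ℂ) {S : Set (ℕ × ℕ)} {i j : ℕ} (h : (i, j) ∈ S) :
    Measurable[sig g S] (g i j) := by
  have key : ∀ b : Bool, Measurable[sig g S]
      (fun ω => if b then (g i j ω).re else (g i j ω).im) := by
    intro b
    rw [measurable_iff_comap_le]
    exact le_iSup₂_of_le (f := fun (q : (ℕ × ℕ) × Bool) (_ : q ∈ {q : (ℕ × ℕ) × Bool | q.1 ∈ S}) =>
      MeasurableSpace.comap
      (fun ω => if q.2 then (g q.1.1 q.1.2 ω).re else (g q.1.1 q.1.2 ω).im) inferInstance)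
      ((i, j), b) h le_rfl
  exact @measurable_of_re_im Ω ℂ _ (sig g S) _ (by simpa using key true)
    (by simpa using key false)

lemma indep_of {g : ℕ → ℕ → Ω → ℂ} (hmeas : ∀ i j, Measurable (g i j))
    (hgauss : IsStdComplexGaussianFamily P (fun p : ℕ × ℕ => g p.1 p.2))
    {S T : Set (ℕ × ℕ)} (hST : Disjoint S T) {E F : Type*} [MeasurableSpace E] [MeasurableSpace F]
    {f : Ω → E} {h : Ω → F} (hf : Measurable[sig g S] f) (hh : Measurable[sig g T] h) :
    IndepFun f h P := by
  rw [IndepFun_iff_Indep]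
  have h1 := hgauss.1
  rw [iIndepFun_iff_iIndep] at h1
  have := indep_iSup_of_disjoint (S := {q : (ℕ × ℕ) × Bool | q.1 ∈ S})
    (T := {q : (ℕ × ℕ) × Bool | q.1 ∈ T}) ?_ h1 ?_
  · exact indep_of_indep_of_le_left (indep_of_indep_of_le_right this
      (measurable_iff_comap_le.1 hh)) (measurable_iff_comap_le.1 hf)
  · rintro ⟨⟨i, j⟩, b⟩
    rw [← measurable_iff_comap_le]
    have := hmeas i j
    cases b
    · exact Complex.measurable_im.comp this
    · exact Complex.measurable_re.comp this
  · exact Set.disjoint_left.2 fun q hq hq' => Set.disjoint_left.1 hST hq hq'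

section basic
variable [IsProbabilityMeasure P] {g : ℕ → ℕ → Ω → ℂ} (hmeas : ∀ i j, Measurable (g i j))
    (hgauss : IsStdComplexGaussianFamily P (fun p : ℕ × ℕ => g p.1 p.2))
include hmeas hgauss

lemma map_re (i j : ℕ) : P.map (fun ω => (g i j ω).re) = gaussianReal 0 (1 / 2 : ℝ≥0) := by
  simpa using hgauss.2 ((i, j), true)
lemma map_im (i j : ℕ) : P.map (fun ω => (g i j ω).im) = gaussianReal 0 (1 / 2 : ℝ≥0) := by
  simpa using hgauss.2 ((i, j), false)

lemma allLp (i j : ℕ) : AllLp P (g i j) := by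
  intro p hp
  have hr : Measurable (fun ω => (g i j ω).re) := Complex.measurable_re.comp (hmeas i j)
  have hi : Measurable (fun ω => (g i j ω).im) := Complex.measurable_im.comp (hmeas i j)
  refine memLp_re_im_iff.1 ⟨?_, ?_⟩
  · have := memLp_id_gaussianReal' (μ := 0) (v := 1 / 2) p hp
    rw [← map_re hmeas hgauss i j, memLp_map_measure_iff (by fun_prop) hr.aemeasurable] at this
    exact this
  · have := memLp_id_gaussianReal' (μ := 0) (v := 1 / 2) p hp
    rw [← map_im hmeas hgauss i j, memLp_map_measure_iff (by fun_prop) hi.aemeasurable] at this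
    exact this

lemma int_re (i j : ℕ) (φ : ℝ → ℝ) (hφ : Continuous φ) :
    ∫ ω, φ (g i j ω).re ∂P = ∫ x, φ x ∂(gaussianReal 0 (1 / 2 : ℝ≥0)) := by
  have hr : Measurable (fun ω => (g i j ω).re) := Complex.measurable_re.comp (hmeas i j)
  rw [← map_re hmeas hgauss i j, integral_map hr.aemeasurable hφ.aestronglyMeasurable]

lemma int_im (i j : ℕ) (φ : ℝ → ℝ) (hφ : Continuous φ) :
    ∫ ω, φ (g i j ω).im ∂P = ∫ x, φ x ∂(gaussianReal 0 (1 / 2 : ℝ≥0)) := by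
  have hr : Measurable (fun ω => (g i j ω).im) := Complex.measurable_im.comp (hmeas i j)
  rw [← map_im hmeas hgauss i j, integral_map hr.aemeasurable hφ.aestronglyMeasurable]

lemma mean_g (i j : ℕ) : ∫ ω, g i j ω ∂P = 0 := by
  have hI := (allLp hmeas hgauss i j).int
  apply Complex.ext
  · have := integral_re hI
    simp only [RCLike.re_to_complex] at this
    rw [← this, int_re hmeas hgauss i j (fun x => x) (by fun_prop), integral_id_gaussianReal]; rfl
  · have := integral_im hI
    simp only [RCLike.im_to_complex] at this
    rw [← this, int_im hmeas hgauss i j (fun x => x) (by fun_prop), integral_id_gaussianReal]; rfl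

lemma mean_conj (i j : ℕ) : ∫ ω, (starRingEnd ℂ) (g i j ω) ∂P = 0 := by
  rw [integral_conj, mean_g hmeas hgauss, map_zero]

omit hmeas hgauss in
lemma gauss_sq : ∫ x : ℝ, x ^ 2 ∂(gaussianReal 0 (1 / 2 : ℝ≥0)) = 1 / 2 := by
  have h := variance_id_gaussianReal (μ := 0) (v := (1 / 2 : ℝ≥0))
  rw [variance_eq_sub (memLp_id_gaussianReal' 2 (by simp))] at h
  simpa [integral_id_gaussianReal] using h

lemma mean_normSq (i j : ℕ) : ∫ ω, Complex.normSq (g i j ω) ∂P = 1 := by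
  have hA := allLp hmeas hgauss i j
  simp only [Complex.normSq_apply, ← sq]
  rw [integral_add (hA.re.pow 2).int (hA.im.pow 2).int,
    int_re hmeas hgauss i j (fun x => x ^ 2) (by fun_prop),
    int_im hmeas hgauss i j (fun x => x ^ 2) (by fun_prop), gauss_sq]
  norm_num

omit hmeas hgauss in
/-- uniform constant for fourth absolute moments -/
lemma exists_K (hmeas : ∀ i j, Measurable (g i j))
    (hgauss : IsStdComplexGaussianFamily P (fun p : ℕ × ℕ => g p.1 p.2)) :
    ∃ K : ℝ, 0 ≤ K ∧ ∀ i j, ∫ ω, Complex.normSq (g i j ω) ^ 2 ∂P ≤ K := by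
  refine ⟨4 * ∫ x : ℝ, x ^ 4 ∂(gaussianReal 0 (1 / 2 : ℝ≥0)),
    mul_nonneg (by norm_num) (integral_nonneg fun x => by positivity), fun i j => ?_⟩
  have hA := allLp hmeas hgauss i j
  calc ∫ ω, Complex.normSq (g i j ω) ^ 2 ∂P
      ≤ ∫ ω, (2 * (g i j ω).re ^ 4 + 2 * (g i j ω).im ^ 4) ∂P := by
        apply integral_mono (hA.normSq.pow 2).int
        · exact ((hA.re.pow 4).int.const_mul 2).add ((hA.im.pow 4).int.const_mul 2)
        · intro ω
          simp only [Complex.normSq_apply]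
          nlinarith [sq_nonneg ((g i j ω).re ^ 2 - (g i j ω).im ^ 2)]
    _ = _ := by
        rw [integral_add ((hA.re.pow 4).int.const_mul 2) ((hA.im.pow 4).int.const_mul 2),
          integral_const_mul, integral_const_mul,
          int_re hmeas hgauss i j (fun x => x ^ 4) (by fun_prop),
          int_im hmeas hgauss i j (fun x => x ^ 4) (by fun_prop)]
        ring
end basic

lemma moments [IsProbabilityMeasure P] (X : ℕ → Ω → ℝ) (hX : ∀ i, AllLp P (X i))
    (h0 : ∀ i, ∫ ω, X i ω ∂P = 0)
    (hind : ∀ n, IndepFun (fun ω => ∑ i ∈ Finset.range n, X i ω) (X n) P)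
    (K : ℝ) (hK : 0 ≤ K) (h2 : ∀ i, ∫ ω, X i ω ^ 2 ∂P ≤ K) (n : ℕ) :
    ∫ ω, (∑ i ∈ Finset.range n, X i ω) ^ 2 ∂P ≤ K * n ∧
    ∀ K4 : ℝ, 0 ≤ K4 → (∀ i, ∫ ω, X i ω ^ 4 ∂P ≤ K4) →
      ∫ ω, (∑ i ∈ Finset.range n, X i ω) ^ 4 ∂P ≤ (3 * K ^ 2 + K4) * n ^ 2 := by
  induction n with
  | zero => simp
  | succ n ih =>
    set A : Ω → ℝ := fun ω => ∑ i ∈ Finset.range n, X i ω with hAdef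
    have hA : AllLp P A := AllLp.sum _ fun i _ => hX i
    have hb := hX n
    have prod : ∀ p q : ℕ, ∫ ω, A ω ^ p * X n ω ^ q ∂P =
        (∫ ω, A ω ^ p ∂P) * ∫ ω, X n ω ^ q ∂P := by
      intro p q
      have : IndepFun (fun ω => A ω ^ p) (fun ω => X n ω ^ q) P :=
        (hind n).comp (φ := fun x : ℝ => x ^ p) (ψ := fun x : ℝ => x ^ q) (by fun_prop) (by fun_prop)
      exact this.integral_fun_mul_eq_mul_integral (hA.pow p).aesm (hb.pow q).aesm
    have I : ∀ p q : ℕ, Integrable (fun ω => A ω ^ p * X n ω ^ q) P := fun p q =>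
      ((hA.pow p).mul (hb.pow q)).int
    have hone : ∫ ω, X n ω ^ 1 ∂P = 0 := by simpa using h0 n
    have hAone : ∫ ω, A ω ^ 1 ∂P = 0 := by
      simp only [pow_one, hAdef]
      rw [integral_finsetSum _ fun i _ => (hX i).int]
      simp [h0]
    have e2 : ∫ ω, (∑ i ∈ Finset.range (n + 1), X i ω) ^ 2 ∂P
        = ∫ ω, A ω ^ 2 ∂P + ∫ ω, X n ω ^ 2 ∂P := by
      have : ∀ ω, (∑ i ∈ Finset.range (n + 1), X i ω) ^ 2 =
          A ω ^ 2 * X n ω ^ 0 + 2 * (A ω ^ 1 * X n ω ^ 1) + A ω ^ 0 * X n ω ^ 2 := by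
        intro ω; rw [Finset.sum_range_succ]; simp only [hAdef]; ring
      simp_rw [this]
      rw [integral_add (by exact (I 2 0).add ((I 1 1).const_mul 2)) (I 0 2),
        integral_add (I 2 0) ((I 1 1).const_mul 2), integral_const_mul, prod, prod, prod, hone]
      simp
    have e4 : ∫ ω, (∑ i ∈ Finset.range (n + 1), X i ω) ^ 4 ∂P
        = ∫ ω, A ω ^ 4 ∂P + 6 * ((∫ ω, A ω ^ 2 ∂P) * ∫ ω, X n ω ^ 2 ∂P)
          + ∫ ω, X n ω ^ 4 ∂P := by
      have : ∀ ω, (∑ i ∈ Finset.range (n + 1), X i ω) ^ 4 =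
          A ω ^ 4 * X n ω ^ 0 + 4 * (A ω ^ 3 * X n ω ^ 1) + 6 * (A ω ^ 2 * X n ω ^ 2)
          + 4 * (A ω ^ 1 * X n ω ^ 3) + A ω ^ 0 * X n ω ^ 4 := by
        intro ω; rw [Finset.sum_range_succ]; simp only [hAdef]; ring
      simp_rw [this]
      have J1 := (I 4 0).add ((I 3 1).const_mul 4)
      have J2 := J1.add ((I 2 2).const_mul 6)
      have J3 := J2.add ((I 1 3).const_mul 4)
      rw [integral_add (by exact J3) (I 0 4), integral_add (by exact J2) ((I 1 3).const_mul 4),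
        integral_add (by exact J1) ((I 2 2).const_mul 6),
        integral_add (I 4 0) ((I 3 1).const_mul 4), integral_const_mul, integral_const_mul,
        integral_const_mul, prod, prod, prod, prod, prod, hone, hAone]
      simp
    have hx2 : 0 ≤ ∫ ω, X n ω ^ 2 ∂P := integral_nonneg fun ω => by positivity
    refine ⟨?_, fun K4 hK4 h4 => ?_⟩
    · rw [e2]; push_cast; linarith [ih.1, h2 n]
    · rw [e4]; push_cast
      have := mul_le_mul ih.1 (h2 n) hx2 (by positivity)
      nlinarith [ih.2 K4 hK4 h4, h4 n, mul_nonneg hK4 (Nat.cast_nonneg (α := ℝ) n), sq_nonneg K]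

section second
variable [IsProbabilityMeasure P] {g : ℕ → ℕ → Ω → ℂ}

/-- the inner product -/
def ip (g : ℕ → ℕ → Ω → ℂ) (k t n : ℕ) (ω : Ω) : ℂ :=
  ∑ j ∈ Finset.range n, g k j ω * (starRingEnd ℂ) (g t j ω)

/-- squared norm -/
def nS (g : ℕ → ℕ → Ω → ℂ) (k n : ℕ) (ω : Ω) : ℝ :=
  ∑ j ∈ Finset.range n, Complex.normSq (g k j ω)

/-- centered interference -/
def dv (g : ℕ → ℕ → Ω → ℂ) (k n t : ℕ) (ω : Ω) : ℝ :=
  Complex.normSq (ip g k t n ω) - nS g k n ω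

lemma conj_meas : Measurable (starRingEnd ℂ) := Complex.continuous_conj.measurable

lemma meas_conj (g : ℕ → ℕ → Ω → ℂ) {S : Set (ℕ × ℕ)} {i j : ℕ} (h : (i, j) ∈ S) :
    Measurable[sig g S] (fun ω => (starRingEnd ℂ) (g i j ω)) :=
  conj_meas.comp (meas_sig g h)

lemma meas_normSq (g : ℕ → ℕ → Ω → ℂ) {S : Set (ℕ × ℕ)} {f : Ω → ℂ} (h : Measurable[sig g S] f) :
    Measurable[sig g S] (fun ω => Complex.normSq (f ω)) :=
  Complex.continuous_normSq.measurable.comp h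

variable (hmeas : ∀ i j, Measurable (g i j))
    (hgauss : IsStdComplexGaussianFamily P (fun p : ℕ × ℕ => g p.1 p.2))
include hmeas hgauss

lemma ip_all (k t n : ℕ) : AllLp P (ip g k t n) :=
  AllLp.sum _ fun j _ => (allLp hmeas hgauss k j).mul (allLp hmeas hgauss t j).conj

lemma nS_all (k n : ℕ) : AllLp P (nS g k n) :=
  AllLp.sum _ fun j _ => (allLp hmeas hgauss k j).normSq

lemma dv_all (k n t : ℕ) : AllLp P (dv g k n t) :=
  (ip_all hmeas hgauss k t n).normSq.sub (nS_all hmeas hgauss k n)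

lemma S_dev {K : ℝ} (hK0 : 0 ≤ K) (hK : ∀ i j, ∫ ω, Complex.normSq (g i j ω) ^ 2 ∂P ≤ K)
    (k n : ℕ) : ∫ ω, (nS g k n ω - n) ^ 2 ∂P ≤ (2 * K + 2) * n := by
  have hN : ∀ i, AllLp P (fun ω => Complex.normSq (g k i ω)) := fun i =>
    (allLp hmeas hgauss k i).normSq
  have := (moments (P := P) (fun j ω => Complex.normSq (g k j ω) - 1)
    (fun i => (hN i).sub (AllLp.const 1)) ?_ ?_ (2 * K + 2) (by positivity) ?_ n).1
  · simpa [nS, Finset.sum_sub_distrib] using this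
  · intro i
    rw [integral_sub (hN i).int (AllLp.const 1).int, mean_normSq hmeas hgauss]
    simp
  · intro m
    refine indep_of hmeas hgauss (S := {p | p.2 < m}) (T := {p | p.2 = m}) ?_ ?_ ?_
    · exact Set.disjoint_left.2 fun q (hq : q.2 < m) (hq' : q.2 = m) => by omega
    · refine Finset.measurable_fun_sum _ fun i hi => ?_
      refine Measurable.sub_const (meas_normSq g (meas_sig g ?_)) _
      simpa using hi
    · exact Measurable.sub_const (meas_normSq g (meas_sig g (by simp))) _
  · intro i
    calc ∫ ω, (Complex.normSq (g k i ω) - 1) ^ 2 ∂P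
        ≤ ∫ ω, (2 * Complex.normSq (g k i ω) ^ 2 + 2) ∂P := by
          apply integral_mono (((hN i).sub (AllLp.const 1)).pow 2).int
            ((((hN i).pow 2).int.const_mul 2).add (AllLp.const 2).int)
          intro ω
          simp only [Pi.add_apply]
          nlinarith [sq_nonneg (Complex.normSq (g k i ω) + 1)]
      _ ≤ 2 * K + 2 := by
          rw [integral_add (((hN i).pow 2).int.const_mul 2) (AllLp.const 2).int,
            integral_const_mul]
          simp
          exact hK k i

lemma w_moment {K : ℝ} (hK0 : 0 ≤ K) (hK : ∀ i j, ∫ ω, Complex.normSq (g i j ω) ^ 2 ∂P ≤ K)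
    {k t : ℕ} (hkt : t ≠ k) (j : ℕ) :
    ∫ ω, Complex.normSq (g k j ω * (starRingEnd ℂ) (g t j ω)) ^ 2 ∂P ≤ K ^ 2 := by
  simp only [map_mul, Complex.normSq_conj, mul_pow]
  have hi : IndepFun (fun ω => Complex.normSq (g k j ω) ^ 2)
      (fun ω => Complex.normSq (g t j ω) ^ 2) P := by
    refine indep_of hmeas hgauss (S := {p | p.1 = k}) (T := {p | p.1 = t}) ?_ ?_ ?_
    · exact Set.disjoint_left.2 fun q (hq : q.1 = k) (hq' : q.1 = t) => by omega
    · exact (meas_normSq g (meas_sig g (by simp))).pow_const 2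
    · exact (meas_normSq g (meas_sig g (by simp))).pow_const 2
  rw [hi.integral_fun_mul_eq_mul_integral ((allLp hmeas hgauss k j).normSq.pow 2).aesm
    ((allLp hmeas hgauss t j).normSq.pow 2).aesm, sq K]
  exact mul_le_mul (hK _ _) (hK _ _) (integral_nonneg fun ω => by positivity) hK0

lemma w_mean {k t : ℕ} (hkt : t ≠ k) (j : ℕ) :
    ∫ ω, g k j ω * (starRingEnd ℂ) (g t j ω) ∂P = 0 := by
  have hi : IndepFun (g k j) (fun ω => (starRingEnd ℂ) (g t j ω)) P := by
    refine indep_of hmeas hgauss (S := {p | p.1 = k}) (T := {p | p.1 = t}) ?_ ?_ ?_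
    · exact Set.disjoint_left.2 fun q (hq : q.1 = k) (hq' : q.1 = t) => by omega
    · exact meas_sig g (by simp)
    · exact meas_conj g (by simp)
  rw [hi.integral_fun_mul_eq_mul_integral (allLp hmeas hgauss k j).aesm
    (allLp hmeas hgauss t j).conj.aesm, mean_g hmeas hgauss, zero_mul]

lemma part_moment {K : ℝ} (hK0 : 0 ≤ K) (hK : ∀ i j, ∫ ω, Complex.normSq (g i j ω) ^ 2 ∂P ≤ K)
    {k t : ℕ} (hkt : t ≠ k) (n : ℕ) (φ : ℂ → ℝ) (hφm : Measurable φ)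
    (hφ : ∀ z, φ z ^ 2 ≤ Complex.normSq z)
    (hφL : ∀ f : Ω → ℂ, AllLp P f → AllLp P (fun ω => φ (f ω)))
    (hφ0 : ∀ f : Ω → ℂ, AllLp P f → ∫ ω, f ω ∂P = 0 → ∫ ω, φ (f ω) ∂P = 0) :
    ∫ ω, (∑ j ∈ Finset.range n, φ (g k j ω * (starRingEnd ℂ) (g t j ω))) ^ 4 ∂P
      ≤ (3 * (1 + K ^ 2) ^ 2 + K ^ 2) * n ^ 2 := by
  have hw : ∀ j, AllLp P (fun ω => g k j ω * (starRingEnd ℂ) (g t j ω)) := fun j =>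
    (allLp hmeas hgauss k j).mul (allLp hmeas hgauss t j).conj
  have h4 : ∀ j, ∫ ω, φ (g k j ω * (starRingEnd ℂ) (g t j ω)) ^ 4 ∂P ≤ K ^ 2 := by
    intro j
    refine le_trans (integral_mono ((hφL _ (hw j)).pow 4).int ((hw j).normSq.pow 2).int ?_)
      (w_moment hmeas hgauss hK0 hK hkt j)
    intro ω
    have := hφ (g k j ω * (starRingEnd ℂ) (g t j ω))
    calc _ = (φ (g k j ω * (starRingEnd ℂ) (g t j ω)) ^ 2) ^ 2 := by ring
      _ ≤ _ := pow_le_pow_left₀ (by positivity) this 2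
  refine (moments (P := P) (fun j ω => φ (g k j ω * (starRingEnd ℂ) (g t j ω)))
    (fun j => hφL _ (hw j)) (fun j => hφ0 _ (hw j) (w_mean hmeas hgauss hkt j)) ?_
    (1 + K ^ 2) (by positivity) ?_ n).2 (K ^ 2) (by positivity) h4
  · intro m
    refine indep_of hmeas hgauss (S := {p | p.2 < m}) (T := {p | p.2 = m}) ?_ ?_ ?_
    · exact Set.disjoint_left.2 fun q (hq : q.2 < m) (hq' : q.2 = m) => by omega
    · refine Finset.measurable_fun_sum _ fun i hi => ?_
      have hi' : i < m := by simpa using hi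
      exact hφm.comp (Measurable.mul (meas_sig g (by simpa using hi')) (meas_conj g (by simpa using hi')))
    · exact hφm.comp (Measurable.mul (meas_sig g (by simp)) (meas_conj g (by simp)))
  · intro j
    calc ∫ ω, φ (g k j ω * (starRingEnd ℂ) (g t j ω)) ^ 2 ∂P
        ≤ ∫ ω, (1 + φ (g k j ω * (starRingEnd ℂ) (g t j ω)) ^ 4) ∂P := by
          apply integral_mono ((hφL _ (hw j)).pow 2).int
            ((AllLp.const 1).int.add ((hφL _ (hw j)).pow 4).int)
          intro ω
          simp only [Pi.add_apply]
          nlinarith [sq_nonneg (φ (g k j ω * (starRingEnd ℂ) (g t j ω)) ^ 2 - 1)]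
      _ ≤ 1 + K ^ 2 := by
          rw [integral_add (AllLp.const 1).int ((hφL _ (hw j)).pow 4).int]
          simp
          exact h4 j

lemma ip_moment {K : ℝ} (hK0 : 0 ≤ K) (hK : ∀ i j, ∫ ω, Complex.normSq (g i j ω) ^ 2 ∂P ≤ K)
    {k t : ℕ} (hkt : t ≠ k) (n : ℕ) :
    ∫ ω, Complex.normSq (ip g k t n ω) ^ 2 ∂P ≤ 4 * (3 * (1 + K ^ 2) ^ 2 + K ^ 2) * n ^ 2 := by
  have hA := ip_all hmeas hgauss k t n
  have h1 := part_moment hmeas hgauss hK0 hK hkt n Complex.re Complex.measurable_re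
    (fun z => by rw [Complex.normSq_apply]; nlinarith [sq_nonneg z.im]) (fun f hf => hf.re)
    (fun f hf h0 => by
      have := integral_re hf.int
      simp only [RCLike.re_to_complex] at this
      rw [this, h0]; rfl)
  have h2 := part_moment hmeas hgauss hK0 hK hkt n Complex.im Complex.measurable_im
    (fun z => by rw [Complex.normSq_apply]; nlinarith [sq_nonneg z.re]) (fun f hf => hf.im)
    (fun f hf h0 => by
      have := integral_im hf.int
      simp only [RCLike.im_to_complex] at this
      rw [this, h0]; rfl)
  simp only [← Complex.re_sum, ← Complex.im_sum] at h1 h2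
  calc ∫ ω, Complex.normSq (ip g k t n ω) ^ 2 ∂P
      ≤ ∫ ω, (2 * (ip g k t n ω).re ^ 4 + 2 * (ip g k t n ω).im ^ 4) ∂P := by
        apply integral_mono (hA.normSq.pow 2).int
        · exact ((hA.re.pow 4).int.const_mul 2).add ((hA.im.pow 4).int.const_mul 2)
        · intro ω
          simp only [Complex.normSq_apply]
          nlinarith [sq_nonneg ((ip g k t n ω).re ^ 2 - (ip g k t n ω).im ^ 2)]
    _ ≤ _ := by
        rw [integral_add ((hA.re.pow 4).int.const_mul 2) ((hA.im.pow 4).int.const_mul 2),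
          integral_const_mul, integral_const_mul]
        unfold ip
        linarith

lemma nS_moment {K : ℝ} (hK0 : 0 ≤ K) (hK : ∀ i j, ∫ ω, Complex.normSq (g i j ω) ^ 2 ∂P ≤ K)
    (k n : ℕ) : ∫ ω, nS g k n ω ^ 2 ∂P ≤ (4 * K + 6) * n ^ 2 := by
  have hA := nS_all hmeas hgauss k n
  have hB := (hA.sub (AllLp.const (n : ℝ))).pow 2
  calc ∫ ω, nS g k n ω ^ 2 ∂P ≤ ∫ ω, (2 * (nS g k n ω - n) ^ 2 + 2 * (n : ℝ) ^ 2) ∂P := by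
        apply integral_mono (hA.pow 2).int ((hB.int.const_mul 2).add (AllLp.const _).int)
        intro ω
        simp only [Pi.add_apply]
        nlinarith [sq_nonneg (nS g k n ω - 2 * n)]
    _ ≤ _ := by
        rw [integral_add (hB.int.const_mul 2) (AllLp.const _).int, integral_const_mul]
        have := S_dev hmeas hgauss hK0 hK k n
        have h3 : (n : ℝ) ≤ n ^ 2 := by exact_mod_cast Nat.le_self_pow (by norm_num) n
        simp
        nlinarith

lemma dv_moment {K : ℝ} (hK0 : 0 ≤ K) (hK : ∀ i j, ∫ ω, Complex.normSq (g i j ω) ^ 2 ∂P ≤ K)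
    {k t : ℕ} (hkt : t ≠ k) (n : ℕ) :
    ∫ ω, dv g k n t ω ^ 2 ∂P
      ≤ (8 * (3 * (1 + K ^ 2) ^ 2 + K ^ 2) + 2 * (4 * K + 6)) * n ^ 2 := by
  have hA := ((ip_all hmeas hgauss k t n).normSq.pow 2).int.const_mul 2
  have hB := ((nS_all hmeas hgauss k n).pow 2).int.const_mul 2
  calc ∫ ω, dv g k n t ω ^ 2 ∂P
      ≤ ∫ ω, (2 * Complex.normSq (ip g k t n ω) ^ 2 + 2 * nS g k n ω ^ 2) ∂P := by
        apply integral_mono ((dv_all hmeas hgauss k n t).pow 2).int (hA.add hB)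
        intro ω
        simp only [dv, Pi.add_apply]
        nlinarith [sq_nonneg (Complex.normSq (ip g k t n ω) + nS g k n ω)]
    _ ≤ _ := by
        rw [integral_add hA hB, integral_const_mul, integral_const_mul]
        linarith [ip_moment hmeas hgauss hK0 hK hkt n, nS_moment hmeas hgauss hK0 hK k n]

lemma W_mean (t p q : ℕ) :
    ∫ ω, ((starRingEnd ℂ) (g t p ω) * g t q ω - if p = q then 1 else 0) ∂P = 0 := by
  rw [integral_sub ((allLp hmeas hgauss t p).conj.mul (allLp hmeas hgauss t q)).int
    (AllLp.const _).int]
  by_cases h : p = q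
  · subst h
    have : ∀ ω, (starRingEnd ℂ) (g t p ω) * g t p ω = ((Complex.normSq (g t p ω) : ℝ) : ℂ) :=
      fun ω => (Complex.normSq_eq_conj_mul_self).symm
    simp_rw [this]
    rw [integral_complex_ofReal, mean_normSq hmeas hgauss]
    simp
  · have hi : IndepFun (fun ω => (starRingEnd ℂ) (g t p ω)) (g t q) P := by
      refine indep_of hmeas hgauss (S := {r | r.2 = p}) (T := {r | r.2 = q}) ?_ ?_ ?_
      · exact Set.disjoint_left.2 fun r (hq : r.2 = p) (hq' : r.2 = q) => by omega
      · exact meas_conj g (by simp)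
      · exact meas_sig g (by simp)
    rw [hi.integral_fun_mul_eq_mul_integral (allLp hmeas hgauss t p).conj.aesm
      (allLp hmeas hgauss t q).aesm, mean_g hmeas hgauss]
    simp [h]

omit [IsProbabilityMeasure P] hmeas hgauss in
lemma dv_expand (k n t : ℕ) (ω : Ω) : ((dv g k n t ω : ℝ) : ℂ) =
    ∑ p ∈ Finset.range n, ∑ q ∈ Finset.range n,
      (g k p ω * (starRingEnd ℂ) (g k q ω)) *
        ((starRingEnd ℂ) (g t p ω) * g t q ω - if p = q then 1 else 0) := by
  simp only [mul_sub, Finset.sum_sub_distrib, mul_ite, mul_one, mul_zero, Finset.sum_ite_eq]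
  rw [dv, Complex.ofReal_sub]
  congr 1
  · rw [← Complex.mul_conj, ip, map_sum, Finset.sum_mul_sum]
    refine Finset.sum_congr rfl fun p _ => Finset.sum_congr rfl fun q _ => ?_
    simp only [map_mul, Complex.conj_conj]; ring
  · rw [nS, Complex.ofReal_sum]
    refine Finset.sum_congr rfl fun p hp => ?_
    rw [if_pos hp, Complex.mul_conj]

lemma cross {k s t : ℕ} (ht : t ≠ k) (hst : s ≠ t) (n : ℕ) :
    ∫ ω, dv g k n s ω * dv g k n t ω ∂P = 0 := by
  have hW : ∀ p q, AllLp P (fun ω => (starRingEnd ℂ) (g t p ω) * g t q ω - if p = q then 1 else 0) :=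
    fun p q => ((allLp hmeas hgauss t p).conj.mul (allLp hmeas hgauss t q)).sub (AllLp.const _)
  have hU : ∀ p q, AllLp P (fun ω => (dv g k n s ω : ℂ) *
      (g k p ω * (starRingEnd ℂ) (g k q ω))) :=
    fun p q => (dv_all hmeas hgauss k n s).ofReal.mul
      ((allLp hmeas hgauss k p).mul (allLp hmeas hgauss k q).conj)
  have e : ((∫ ω, dv g k n s ω * dv g k n t ω ∂P : ℝ) : ℂ) = 0 := by
    rw [← integral_complex_ofReal]
    have : ∀ ω, ((dv g k n s ω * dv g k n t ω : ℝ) : ℂ) =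
        ∑ p ∈ Finset.range n, ∑ q ∈ Finset.range n,
          ((dv g k n s ω : ℂ) * (g k p ω * (starRingEnd ℂ) (g k q ω))) *
          ((starRingEnd ℂ) (g t p ω) * g t q ω - if p = q then 1 else 0) := by
      intro ω
      rw [Complex.ofReal_mul, dv_expand k n t ω, Finset.mul_sum]
      refine Finset.sum_congr rfl fun p _ => ?_
      rw [Finset.mul_sum]
      refine Finset.sum_congr rfl fun q _ => ?_
      ring
    simp_rw [this]
    rw [integral_finsetSum _ fun p _ => (AllLp.sum _ fun q _ => (hU p q).mul (hW p q)).int]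
    refine Finset.sum_eq_zero fun p _ => ?_
    rw [integral_finsetSum _ fun q _ => ((hU p q).mul (hW p q)).int]
    refine Finset.sum_eq_zero fun q _ => ?_
    have hi : IndepFun (fun ω => (dv g k n s ω : ℂ) * (g k p ω * (starRingEnd ℂ) (g k q ω)))
        (fun ω => (starRingEnd ℂ) (g t p ω) * g t q ω - if p = q then 1 else 0) P := by
      refine indep_of hmeas hgauss (S := {r | r.1 ≠ t}) (T := {r | r.1 = t}) ?_ ?_ ?_
      · exact Set.disjoint_left.2 fun r (hq : r.1 ≠ t) (hq' : r.1 = t) => hq hq'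
      · have hk : ∀ j, (k, j) ∈ {r : ℕ × ℕ | r.1 ≠ t} := fun j => by simpa using ht.symm
        have hs' : ∀ j, (s, j) ∈ {r : ℕ × ℕ | r.1 ≠ t} := fun j => by simpa using hst
        refine Measurable.mul (Complex.measurable_ofReal.comp (Measurable.sub ?_ ?_))
          (Measurable.mul (meas_sig g (hk p)) (meas_conj g (hk q)))
        · exact meas_normSq g (Finset.measurable_fun_sum _ fun j _ =>
            Measurable.mul (meas_sig g (hk j)) (meas_conj g (hs' j)))
        · exact Finset.measurable_fun_sum _ fun j _ => meas_normSq g (meas_sig g (hk j))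
      · exact Measurable.sub_const (Measurable.mul (meas_conj g (by simp)) (meas_sig g (by simp))) _
    rw [hi.integral_fun_mul_eq_mul_integral (hU p q).aesm (hW p q).aesm,
      W_mean hmeas hgauss, mul_zero]
  exact_mod_cast e

lemma sum_dv_moment {K : ℝ} (hK0 : 0 ≤ K)
    (hK : ∀ i j, ∫ ω, Complex.normSq (g i j ω) ^ 2 ∂P ≤ K)
    {k : ℕ} (F : Finset ℕ) (hF : ∀ t ∈ F, t ≠ k) (n : ℕ) :
    ∫ ω, (∑ t ∈ F, dv g k n t ω) ^ 2 ∂P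
      ≤ F.card * ((8 * (3 * (1 + K ^ 2) ^ 2 + K ^ 2) + 2 * (4 * K + 6)) * n ^ 2) := by
  have hd := dv_all hmeas hgauss k n
  simp_rw [sq (∑ t ∈ F, dv g k n t _), Finset.sum_mul_sum]
  rw [integral_finsetSum _ fun s _ => (AllLp.sum _ fun t _ => (hd s).mul (hd t)).int,
    ← nsmul_eq_mul]
  refine Finset.sum_le_card_nsmul _ _ _ fun s hs => ?_
  rw [integral_finsetSum _ fun t _ => ((hd s).mul (hd t)).int,
    Finset.sum_eq_single_of_mem s hs fun t ht hts =>
      cross hmeas hgauss (hF t ht) hts.symm n]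
  simp_rw [← sq]
  exact dv_moment hmeas hgauss hK0 hK (hF s hs) n

omit hmeas hgauss in
lemma abs_le_sqrt {d : Ω → ℝ} (hd : AllLp P d) {B : ℝ} (hB : ∫ ω, d ω ^ 2 ∂P ≤ B) :
    ∫ ω, |d ω| ∂P ≤ √B := by
  apply Real.le_sqrt_of_sq_le
  have := variance_nonneg (fun ω => |d ω|) P
  rw [variance_eq_sub (hd.abs 2 (by simp))] at this
  simp only [Pi.pow_apply, sq_abs] at this
  linarith
end second

lemma log_lip {u v : ℝ} (hu : 1 ≤ u) (hv : 1 ≤ v) : |Real.log u - Real.log v| ≤ |u - v| := by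
  have key : ∀ a b : ℝ, 1 ≤ a → 1 ≤ b → Real.log a - Real.log b ≤ |a - b| := by
    intro a b ha hb
    rw [← Real.log_div (by positivity) (by positivity)]
    have h1 : Real.log (a / b) ≤ a / b - 1 := Real.log_le_sub_one_of_pos (by positivity)
    have h2 : a / b - 1 = (a - b) / b := by field_simp
    have h3 : (a - b) / b ≤ |a - b| := by
      rw [div_le_iff₀ (by positivity)]
      nlinarith [le_abs_self (a - b), abs_nonneg (a - b)]
    linarith
  rw [abs_le]
  constructor
  · have := key v u hv hu
    rw [abs_sub_comm] at this; linarith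
  · exact key u v hu hv

lemma det_bound {X Y x y : ℝ} (hX : 0 ≤ X) (hx : 0 ≤ x) (hY : 1 ≤ Y) (hy : 1 ≤ y) :
    |Real.log (1 + X / Y) - Real.log (1 + x / y)| ≤ |X - x| + x * |Y - y| := by
  have h1 : 0 ≤ X / Y := by positivity
  have h2 : 0 ≤ x / y := by positivity
  refine (log_lip (by linarith) (by linarith)).trans ?_
  have e : 1 + X / Y - (1 + x / y) = (X - x) / Y + x * ((y - Y) / (Y * y)) := by
    field_simp; ring
  rw [e]
  refine (abs_add_le _ _).trans (add_le_add ?_ ?_)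
  · rw [abs_div, abs_of_pos (by positivity : 0 < Y)]
    exact div_le_self (abs_nonneg _) hY
  · rw [abs_mul, abs_of_nonneg hx, abs_div, abs_sub_comm,
      abs_of_pos (by positivity : 0 < Y * y)]
    exact mul_le_mul_of_nonneg_left (div_le_self (abs_nonneg _) (by nlinarith)) hx

lemma det_bound2 {r a x b d1 d2 e : ℝ} (hr : 0 ≤ r) (ha : 0 ≤ a) (hx : 0 ≤ x)
    (hb0 : 0 ≤ b) (hb1 : b ≤ 1) (hbe : 1 - b ≤ e) (hY : 1 ≤ 1 + r * (d2 + b * (1 + d1))) :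
    |Real.log (1 + a * (1 + d1) ^ 2 / (1 + r * (d2 + b * (1 + d1)))) - Real.log (1 + x / (1 + r))|
      ≤ |a - x| * (2 + 2 * d1 ^ 2) + x * (d1 ^ 2 + 2 * |d1|) + x * (r * (|d2| + |d1| + e)) := by
  refine (det_bound (by positivity) hx hY (by linarith)).trans ?_
  have h1 : |a * (1 + d1) ^ 2 - x| ≤ |a - x| * (2 + 2 * d1 ^ 2) + x * (d1 ^ 2 + 2 * |d1|) := by
    have e1 : a * (1 + d1) ^ 2 - x = (a - x) * (1 + d1) ^ 2 + x * (d1 ^ 2 + 2 * d1) := by ring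
    rw [e1]
    refine (abs_add_le _ _).trans (add_le_add ?_ ?_)
    · rw [abs_mul, abs_of_nonneg (sq_nonneg (1 + d1))]
      exact mul_le_mul_of_nonneg_left (by nlinarith [sq_nonneg (d1 - 1)]) (abs_nonneg _)
    · rw [abs_mul, abs_of_nonneg hx]
      refine mul_le_mul_of_nonneg_left ((abs_add_le _ _).trans ?_) hx
      rw [abs_mul, abs_of_nonneg (sq_nonneg d1), abs_two]
  have h2 : |1 + r * (d2 + b * (1 + d1)) - (1 + r)| ≤ r * (|d2| + |d1| + e) := by
    have e1 : 1 + r * (d2 + b * (1 + d1)) - (1 + r) = r * (d2 + b * d1 + (b - 1)) := by ring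
    rw [e1, abs_mul, abs_of_nonneg hr]
    refine mul_le_mul_of_nonneg_left ((abs_add_three _ _ _).trans ?_) hr
    have h3 : |b * d1| ≤ |d1| := by
      rw [abs_mul, abs_of_nonneg hb0]; exact mul_le_of_le_one_left (abs_nonneg _) hb1
    have h4 : |b - 1| ≤ e := by rw [abs_le]; constructor <;> linarith
    linarith
  nlinarith [mul_le_mul_of_nonneg_left h2 hx]

/-- The quantitative estimate at fixed dimension. -/
lemma quant [IsProbabilityMeasure P] {g : ℕ → ℕ → Ω → ℂ} (hmeas : ∀ i j, Measurable (g i j))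
    (hgauss : IsStdComplexGaussianFamily P (fun p : ℕ × ℕ => g p.1 p.2))
    {C1 C2 : ℝ} (hC2 : 0 ≤ C2)
    (hS : ∀ k n : ℕ, ∫ ω, (nS g k n ω - n) ^ 2 ∂P ≤ C1 * n)
    (hD : ∀ (k : ℕ) (F : Finset ℕ), (∀ t ∈ F, t ≠ k) → ∀ n : ℕ,
      ∫ ω, (∑ t ∈ F, dv g k n t ω) ^ 2 ∂P ≤ F.card * (C2 * n ^ 2))
    {Pt γ x : ℝ} (hPt : 0 < Pt) (hγ : 0 < γ) (hx : 0 ≤ x) (k l Q : ℕ) (hl : 1 ≤ l) (hQ : 1 ≤ Q) :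
    |∫ ω, Real.log (1 + (Pt / (γ * Q * l) * nS g k l ω ^ 2) /
      (1 + Pt / (γ * Q * l) * ∑ t ∈ (Finset.range Q).filter (fun t => t ≠ k),
        Complex.normSq (ip g k t l ω))) ∂P - Real.log (1 + x / (1 + Pt / γ))|
    ≤ |Pt / γ * (l / Q) - x| * (2 + 2 * (C1 * (1 / l))) + x * (C1 * (1 / l) + 2 * √(C1 * (1 / l)))
      + x * (Pt / γ * (√(C2 * (1 / Q)) + √(C1 * (1 / l)) + 1 / Q)) := by
  have hl0 : (0 : ℝ) < l := by exact_mod_cast hl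
  have hQ0 : (0 : ℝ) < Q := by exact_mod_cast hQ
  set F := (Finset.range Q).filter (fun t => t ≠ k) with hF
  have hFk : ∀ t ∈ F, t ≠ k := fun t ht => (Finset.mem_filter.1 ht).2
  have hN1 : F.card ≤ Q := by simpa using Finset.card_filter_le (Finset.range Q) (fun t => t ≠ k)
  have hN2 : Q ≤ F.card + 1 := by
    have : Finset.range Q ⊆ insert k F := by
      intro t ht
      by_cases h : t = k
      · simp [h]
      · simp [hF, h, Finset.mem_range.1 ht]
    simpa using (Finset.card_le_card this).trans (Finset.card_insert_le _ _)
  have hN1' : (F.card : ℝ) ≤ Q := by exact_mod_cast hN1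
  have hN2' : (Q : ℝ) ≤ F.card + 1 := by exact_mod_cast hN2
  set d1 : Ω → ℝ := fun ω => (nS g k l ω - l) * (1 / l) with hd1
  set d2 : Ω → ℝ := fun ω => (∑ t ∈ F, dv g k l t ω) * (1 / (Q * l)) with hd2
  have hd1L : AllLp P d1 :=
    ((nS_all hmeas hgauss k l).sub (AllLp.const _)).mul (AllLp.const _)
  have hd2L : AllLp P d2 :=
    (AllLp.sum _ fun t _ => dv_all hmeas hgauss k l t).mul (AllLp.const _)
  have v1 : ∫ ω, d1 ω ^ 2 ∂P ≤ C1 * (1 / l) := by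
    simp only [hd1, mul_pow]
    rw [integral_mul_const]
    calc _ ≤ (C1 * l) * (1 / (l : ℝ)) ^ 2 :=
          mul_le_mul_of_nonneg_right (hS k l) (by positivity)
      _ = _ := by field_simp
  have v2 : ∫ ω, d2 ω ^ 2 ∂P ≤ C2 * (1 / Q) := by
    simp only [hd2, mul_pow]
    rw [integral_mul_const]
    calc _ ≤ (F.card * (C2 * l ^ 2)) * (1 / ((Q : ℝ) * l)) ^ 2 :=
          mul_le_mul_of_nonneg_right (hD k F hFk l) (by positivity)
      _ ≤ (Q * (C2 * l ^ 2)) * (1 / ((Q : ℝ) * l)) ^ 2 := by gcongr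
      _ = _ := by field_simp
  have a1 := abs_le_sqrt hd1L v1
  have a2 := abs_le_sqrt hd2L v2
  set X : Ω → ℝ := fun ω => Pt / (γ * Q * l) * nS g k l ω ^ 2 with hXdef
  set Y : Ω → ℝ := fun ω => 1 + Pt / (γ * Q * l) * ∑ t ∈ F, Complex.normSq (ip g k t l ω) with hYdef
  have hXL : AllLp P X := (AllLp.const _).mul ((nS_all hmeas hgauss k l).pow 2)
  have hYL : AllLp P Y := (AllLp.const _).add ((AllLp.const _).mul
    (AllLp.sum _ fun t _ => (ip_all hmeas hgauss k t l).normSq))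
  have hX0 : ∀ ω, 0 ≤ X ω := fun ω => by simp only [hXdef]; positivity
  have hY1 : ∀ ω, 1 ≤ Y ω := fun ω => by
    have : 0 ≤ Pt / (γ * Q * l) * ∑ t ∈ F, Complex.normSq (ip g k t l ω) :=
      mul_nonneg (by positivity) (Finset.sum_nonneg fun t _ => Complex.normSq_nonneg _)
    simp only [hYdef]; linarith
  have hXe : ∀ ω, X ω = Pt / γ * (l / Q) * (1 + d1 ω) ^ 2 := fun ω => by
    simp only [hXdef, hd1]; field_simp; ring
  have hYe : ∀ ω, Y ω = 1 + Pt / γ * (d2 ω + F.card / Q * (1 + d1 ω)) := fun ω => by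
    simp only [hYdef, hd1, hd2, dv, Finset.sum_sub_distrib, Finset.sum_const, nsmul_eq_mul]
    field_simp; ring
  have pt : ∀ ω, |Real.log (1 + X ω / Y ω) - Real.log (1 + x / (1 + Pt / γ))| ≤
      |Pt / γ * (l / Q) - x| * (2 + 2 * d1 ω ^ 2) + x * (d1 ω ^ 2 + 2 * |d1 ω|)
        + x * (Pt / γ * (|d2 ω| + |d1 ω| + 1 / Q)) := fun ω => by
    have h := hY1 ω
    rw [hYe] at h
    rw [hXe, hYe]
    refine det_bound2 (by positivity) (by positivity) hx (by positivity) ?_ ?_ h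
    · rw [div_le_one hQ0]; exact hN1'
    · rw [one_sub_div hQ0.ne']
      exact div_le_div_of_nonneg_right (by linarith) hQ0.le
  have hlogI : Integrable (fun ω => Real.log (1 + X ω / Y ω)) P := by
    refine hXL.int.mono' ?_ (Filter.Eventually.of_forall fun ω => ?_)
    · exact (Real.measurable_log.comp_aemeasurable
        ((hXL.aesm.aemeasurable.div hYL.aesm.aemeasurable).const_add 1)).aestronglyMeasurable
    · have h1 : 0 ≤ X ω / Y ω := div_nonneg (hX0 ω) (by linarith [hY1 ω])
      rw [Real.norm_of_nonneg (Real.log_nonneg (by linarith))]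
      have := Real.log_le_sub_one_of_pos (by linarith : 0 < 1 + X ω / Y ω)
      have h2 := div_le_self (hX0 ω) (hY1 ω)
      linarith
  have e0 : ∫ ω, Real.log (1 + X ω / Y ω) ∂P - Real.log (1 + x / (1 + Pt / γ)) =
      ∫ ω, (Real.log (1 + X ω / Y ω) - Real.log (1 + x / (1 + Pt / γ))) ∂P := by
    rw [integral_sub hlogI (integrable_const _)]; simp
  rw [e0]
  have I1 : Integrable (fun ω => d1 ω ^ 2) P := (hd1L.pow 2).int
  have I2 : Integrable (fun ω => |d1 ω|) P := hd1L.abs.int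
  have I3 : Integrable (fun ω => |d2 ω|) P := hd2L.abs.int
  have J1 : Integrable (fun ω => |Pt / γ * (l / Q) - x| * (2 + 2 * d1 ω ^ 2)) P :=
    ((integrable_const _).add (I1.const_mul 2)).const_mul _
  have J2 : Integrable (fun ω => x * (d1 ω ^ 2 + 2 * |d1 ω|)) P :=
    (I1.add (I2.const_mul 2)).const_mul _
  have J3 : Integrable (fun ω => x * (Pt / γ * (|d2 ω| + |d1 ω| + 1 / Q))) P :=
    (((I3.add I2).add (integrable_const _)).const_mul _).const_mul _
  refine abs_integral_le_integral_abs.trans ?_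
  refine (integral_mono (hlogI.sub (integrable_const _)).abs ((J1.add J2).add J3) pt).trans ?_
  have E : ∫ ω, (|Pt / γ * (l / Q) - x| * (2 + 2 * d1 ω ^ 2) + x * (d1 ω ^ 2 + 2 * |d1 ω|)
        + x * (Pt / γ * (|d2 ω| + |d1 ω| + 1 / Q))) ∂P =
      |Pt / γ * (l / Q) - x| * (2 + 2 * ∫ ω, d1 ω ^ 2 ∂P)
        + x * (∫ ω, d1 ω ^ 2 ∂P + 2 * ∫ ω, |d1 ω| ∂P)
        + x * (Pt / γ * (∫ ω, |d2 ω| ∂P + ∫ ω, |d1 ω| ∂P + 1 / Q)) := by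
    rw [integral_add (by exact J1.add J2) J3, integral_add J1 J2, integral_const_mul,
      integral_const_mul, integral_const_mul, integral_const_mul,
      integral_add (integrable_const _) (I1.const_mul 2), integral_add I1 (I2.const_mul 2),
      integral_add (by exact I3.add I2) (integrable_const _), integral_add I3 I2,
      integral_const_mul, integral_const_mul]
    simp
  refine (le_of_eq E).trans ?_
  gcongr

end MF

/-- MF-based vector coded caching. With `Q_L = ⌈cL⌉`, rows `h_ϑ` of an i.i.d.
standard complex Gaussian `Q_L×L` matrix, `X_L = (P_t/(G·Q_L·L))‖h_k‖⁴` and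
`Y_L = 1 + (P_t/(G·Q_L·L))·Σ_{ϑ≠k}|h_kᵀh_ϑ*|²`, it holds that
`E[ln(1+X_L/Y_L)] → ln(1 + (1/c)·P_t/(P_t+G))`; consequently the MF average sum-rate
`R̄^{MF}(G,cL) = c·G·L·E[ln(1+X_L/Y_L)]` satisfies `R̄^{MF}(G,cL)/(cGL) → ln(1 + (1/c)·P_t/(P_t+G))`. -/
theorem stmt_0 {Ω : Type*} [MeasurableSpace Ω] (P : Measure Ω) [IsProbabilityMeasure P]
    (Pt : ℝ) (hPt : 0 < Pt) (G : ℕ) (hG : 1 ≤ G) (c : ℝ) (hc : 0 < c)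
    (g : ℕ → ℕ → Ω → ℂ) (hmeas : ∀ i j, Measurable (g i j))
    (hgauss : IsStdComplexGaussianFamily P (fun p : ℕ × ℕ => g p.1 p.2)) (k : ℕ) :
    let QL : ℕ → ℕ := fun l => Nat.ceil (c * l)
    let X : ℕ → Ω → ℝ := fun l ω =>
      Pt / (G * QL l * l) * (∑ j ∈ Finset.range l, Complex.normSq (g k j ω)) ^ 2
    let Y : ℕ → Ω → ℝ := fun l ω =>
      1 + Pt / (G * QL l * l) *
        ∑ ϑ ∈ (Finset.range (QL l)).filter (fun ϑ => ϑ ≠ k),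
          Complex.normSq (∑ j ∈ Finset.range l, g k j ω * (starRingEnd ℂ) (g ϑ j ω))
    Filter.Tendsto (fun l : ℕ => ∫ ω, Real.log (1 + X l ω / Y l ω) ∂P)
      Filter.atTop (nhds (Real.log (1 + 1 / c * (Pt / (Pt + G))))) ∧
    Filter.Tendsto
      (fun l : ℕ => (c * G * l * ∫ ω, Real.log (1 + X l ω / Y l ω) ∂P) / (c * G * l))
      Filter.atTop (nhds (Real.log (1 + 1 / c * (Pt / (Pt + G))))) := by
  intro QL X Y
  have hGpos : (0 : ℝ) < G := by exact_mod_cast hG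
  have first : Filter.Tendsto (fun l : ℕ => ∫ ω, Real.log (1 + X l ω / Y l ω) ∂P)
      Filter.atTop (nhds (Real.log (1 + 1 / c * (Pt / (Pt + G))))) := by
    obtain ⟨K, hK0, hK⟩ := MF.exists_K hmeas hgauss
    set C1 : ℝ := 2 * K + 2
    set C2 : ℝ := 8 * (3 * (1 + K ^ 2) ^ 2 + K ^ 2) + 2 * (4 * K + 6)
    have hC2 : 0 ≤ C2 := by positivity
    have hS := MF.S_dev hmeas hgauss hK0 hK
    have hD : ∀ (k : ℕ) (F : Finset ℕ), (∀ t ∈ F, t ≠ k) → ∀ n : ℕ,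
      ∫ ω, (∑ t ∈ F, MF.dv g k n t ω) ^ 2 ∂P ≤ F.card * (C2 * n ^ 2) :=
      fun k F hF n => MF.sum_dv_moment hmeas hgauss hK0 hK F hF n
    set x : ℝ := Pt / G * (1 / c) with hx
    have hx0 : 0 ≤ x := by positivity
    have hlim : Real.log (1 + 1 / c * (Pt / (Pt + G))) = Real.log (1 + x / (1 + Pt / G)) := by
      congr 2
      rw [hx]; field_simp; ring
    rw [hlim]
    have tl : Filter.Tendsto (fun l : ℕ => 1 / (l : ℝ)) Filter.atTop (nhds 0) :=
      tendsto_one_div_atTop_nhds_zero_nat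
    have tr : Filter.Tendsto (fun l : ℕ => (l : ℝ) / (QL l : ℝ)) Filter.atTop (nhds (1 / c)) := by
      have h := (tendsto_nat_ceil_mul_div_atTop (R := ℝ) hc.le).comp
        (tendsto_natCast_atTop_atTop (R := ℝ))
      have h2 := h.inv₀ hc.ne'
      rw [← one_div] at h2
      refine h2.congr fun l => ?_
      simp [QL]
    have tQ : Filter.Tendsto (fun l : ℕ => 1 / (QL l : ℝ)) Filter.atTop (nhds 0) := by
      have h := tr.mul tl
      rw [mul_zero] at h
      refine h.congr' ?_
      filter_upwards [Filter.eventually_ge_atTop 1] with l hl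
      have : (0 : ℝ) < l := by exact_mod_cast hl
      field_simp
    have t1 := tl.const_mul C1
    have t2 := (tQ.const_mul C2).sqrt
    have t1s := t1.sqrt
    have ta := (((tr.const_mul (Pt / G)).sub_const x).abs).mul ((t1.const_mul 2).const_add 2)
    have tb := (t1.add (t1s.const_mul 2)).const_mul x
    have td := ((((t2.add t1s).add tQ).const_mul (Pt / (G : ℝ)))).const_mul x
    have tot := (ta.add tb).add td
    rw [tendsto_iff_dist_tendsto_zero]
    refine squeeze_zero' (Filter.Eventually.of_forall fun l => dist_nonneg) ?_
      (Eq.subst (motive := fun z => Filter.Tendsto _ Filter.atTop (nhds z)) (by simp [hx]) tot)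
    filter_upwards [Filter.eventually_ge_atTop 1] with l hl
    have hl0 : (0 : ℝ) < l := by exact_mod_cast hl
    have hQ : 1 ≤ QL l := Nat.one_le_iff_ne_zero.2 (Nat.ceil_pos.2 (by positivity)).ne'
    rw [Real.dist_eq]
    exact MF.quant hmeas hgauss hC2 hS hD hPt hGpos hx0 k l (QL l) hl hQ
  refine ⟨first, first.congr' ?_⟩
  filter_upwards [Filter.eventually_ge_atTop 1] with l hl
  have hl0 : (0 : ℝ) < l := by exact_mod_cast hl
  field_simp
end

section
/- Fix real P_t > 0 and c' > 0. Let (g_{i,j})_{i,j≥1} be a doubly-indexed i.i.d. array of standard complex Gaussian random variables, for each L ≥ 1 set Q_L = ⌈c'L⌉, and let h_1,…,h_{Q_L} ∈ ℂ^L be the rows of the Q_L×L matrix (g_{i,j})_{1≤i≤Q_L,1≤j≤L}. Fix k and define X_L = (P_t/(Q_L·L))·‖h_k‖⁴ and Y_L = 1 + (P_t/(Q_L·L))·Σ_{ϑ≠k, 1≤ϑ≤Q_L} |h_k^T h_ϑ^*|². Then lim_{L→∞} E[ln(1 + X_L/Y_L)] = ln(1 + (1/c')·P_t/(P_t + 1));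 equivalently, the average sum-rate R̄^{MF}(1, c'L) = c'·L·E[ln(1 + X_L/Y_L)] of the cacheless MF-based MISO broadcast channel with c'L streams satisfies R̄^{MF}(1, c'L)/(c'·L) → ln(1 + (1/c')·P_t/(P_t + 1)) as L → ∞. -/
open MeasureTheory ProbabilityTheory
open scoped NNReal

/-- Fourth moment of the standard real Gaussian. -/
noncomputable def gK : ℝ := ∫ x, x ^ 4 ∂(gaussianReal 0 1)

lemma gK_nonneg : 0 ≤ gK := integral_nonneg fun x => by positivity

lemma gaussian_moments {Ω : Type*} [MeasurableSpace Ω] {P : Measure Ω} [IsProbabilityMeasure P]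
    {X : Ω → ℝ} (hX : Measurable X) {v : ℝ≥0} (h : Measure.map X P = gaussianReal 0 v) :
    ∫ ω, X ω ^ 2 ∂P = v ∧ ∫ ω, (X ω ^ 2) ^ 2 ∂P = gK * (v : ℝ) ^ 2 ∧
      MemLp (fun ω => X ω ^ 2) 2 P := by
  have hm : MemLp X 4 P := by
    have := memLp_id_gaussianReal (μ := 0) (v := v) 4
    rw [← h, memLp_map_measure_iff (by fun_prop) hX.aemeasurable] at this
    simpa using this
  refine ⟨?_, ?_, ?_⟩
  · have h1 : ∫ x, x ^ 2 ∂(gaussianReal 0 v) = v := by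
      have := variance_id_gaussianReal (μ := 0) (v := v)
      rw [variance_eq_sub (by simpa using memLp_id_gaussianReal (μ := 0) (v := v) 2)] at this
      simpa using this
    rw [← h, integral_map hX.aemeasurable (by fun_prop)] at h1
    exact h1
  · have h1 : gaussianReal 0 v = Measure.map (fun x => Real.sqrt v * x) (gaussianReal 0 1) := by
      rw [gaussianReal_map_const_mul]
      congr 1
      · simp
      · ext; simp
    have h2 : ∫ x, (x ^ 2) ^ 2 ∂(gaussianReal 0 v) = gK * (v : ℝ) ^ 2 := by
      rw [h1, integral_map (by fun_prop) (by fun_prop)]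
      have : ∀ x : ℝ, ((Real.sqrt v * x) ^ 2) ^ 2 = x ^ 4 * (v : ℝ) ^ 2 := by
        intro x
        have hv : Real.sqrt (v : ℝ) ^ 2 = v := Real.sq_sqrt v.2
        rw [mul_pow, hv]; ring
      simp_rw [this]
      rw [integral_mul_const, gK]
    rw [← h, integral_map hX.aemeasurable (by fun_prop)] at h2
    exact h2
  · rw [memLp_two_iff_integrable_sq (by fun_prop)]
    have := hm.integrable_norm_pow (by norm_num)
    refine this.congr (ae_of_all _ fun ω => ?_)
    simp only [Real.norm_eq_abs]
    rw [← sq_abs (X ω)]; ring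

lemma gaussian_comb {Ω ι : Type*} [MeasurableSpace Ω] {P : Measure Ω} [IsProbabilityMeasure P]
    {ξ : ι → Ω → ℝ} (hm : ∀ i, Measurable (ξ i)) (hi : iIndepFun ξ P)
    (hg : ∀ i, Measure.map (ξ i) P = gaussianReal 0 (1 / 2 : ℝ≥0)) (s : Finset ι) (c : ι → ℝ) :
    ∃ v : ℝ≥0, (v : ℝ) = (∑ i ∈ s, c i ^ 2) / 2 ∧
      Measure.map (fun ω => ∑ i ∈ s, c i * ξ i ω) P = gaussianReal 0 v := by
  classical
  induction s using Finset.induction_on with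
  | empty => 
    refine ⟨0, by simp, ?_⟩
    simp
  | insert i s his ih =>
    obtain ⟨v, hv, hl⟩ := ih
    have h1 : Measure.map (fun ω => c i * ξ i ω) P
        = gaussianReal 0 (NNReal.mk (c i ^ 2) (sq_nonneg _) * (1 / 2 : ℝ≥0)) := by
      have := gaussianReal_map_const_mul (μ := 0) (v := (1 / 2 : ℝ≥0)) (c i)
      rw [← hg i, Measure.map_map (by fun_prop) (hm i)] at this
      rw [mul_zero] at this
      exact this
    have h2 : iIndepFun (fun i ω => c i * ξ i ω) P :=
      hi.comp (fun i x => c i * x) (fun i => by fun_prop)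
    have h3 := h2.indepFun_finsetSum_of_notMem (fun i => (hm i).const_mul _) his
    have h4 : (∑ j ∈ s, fun ω => c j * ξ j ω) = fun ω => ∑ j ∈ s, c j * ξ j ω := by
      ext ω; simp
    rw [h4] at h3
    refine ⟨NNReal.mk (c i ^ 2) (sq_nonneg _) * (1 / 2 : ℝ≥0) + v, ?_, ?_⟩
    rotate_left
    · have := gaussianReal_add_gaussianReal_of_indepFun h3.symm h1 hl
      simp_rw [Finset.sum_insert his]
      rw [add_zero] at this
      exact this
    · rw [Finset.sum_insert his]
      push_cast
      rw [hv]
      simp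
      ring

lemma indep_ext {Ω ι : Type*} [MeasurableSpace Ω] [DecidableEq ι] {P : Measure Ω}
    {ξ : ι → Ω → ℝ} (hm : ∀ i, Measurable (ξ i)) (hi : iIndepFun ξ P) (S T : Finset ι)
    (hST : Disjoint S T) :
    IndepFun (fun ω p => if p ∈ S then ξ p ω else 0) (fun ω p => if p ∈ T then ξ p ω else 0) P := by
  have h := hi.indepFun_finset S T hST hm
  have me : ∀ S : Finset ι, Measurable (fun (v : S → ℝ) (p : ι) => if h : p ∈ S then v ⟨p, h⟩ else 0) := by
    intro S
    refine measurable_pi_lambda _ fun p => ?_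
    by_cases hp : p ∈ S
    · simp only [hp, dif_pos]; fun_prop
    · simp only [hp, dif_neg, not_false_eq_true]; fun_prop
  have := h.comp (me S) (me T)
  convert this using 1 <;>
  · ext ω p
    simp only [Function.comp_apply]
    split_ifs <;> rfl

lemma sum_var {Ω ι : Type*} [MeasurableSpace Ω] {P : Measure Ω} [IsProbabilityMeasure P]
    {V : ι → Ω → ℝ} (s : Finset ι) (hL : ∀ i ∈ s, MemLp (V i) 2 P)
    (hp : Set.Pairwise (s : Set ι) fun i j => IndepFun (V i) (V j) P) (m B : ℝ)
    (hmean : ∀ i ∈ s, ∫ ω, V i ω ∂P = m) (hB : ∀ i ∈ s, ∫ ω, V i ω ^ 2 ∂P ≤ B) :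
    MemLp (fun ω => (∑ i ∈ s, V i ω) - s.card * m) 2 P ∧
    ∫ ω, ((∑ i ∈ s, V i ω) - s.card * m) ^ 2 ∂P ≤ s.card * B := by
  have h0 : MemLp (fun ω => ∑ i ∈ s, V i ω) 2 P := memLp_finsetSum s hL
  have h1 := IndepFun.variance_sum hL hp
  have h4 : (∑ j ∈ s, V j) = fun ω => ∑ j ∈ s, V j ω := by
    ext ω; simp
  have hE : ∫ ω, (∑ i ∈ s, V i ω) ∂P = s.card * m := by
    rw [integral_finsetSum s (fun i hi => (hL i hi).integrable (by norm_num)), Finset.sum_congr rfl hmean]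
    simp
  refine ⟨h0.sub (memLp_const _), ?_⟩
  rw [h4, variance_eq_integral h0.aemeasurable, hE] at h1
  rw [h1]
  calc _ ≤ ∑ i ∈ s, B := Finset.sum_le_sum fun i hi =>
        (variance_le_expectation_sq (hL i hi).1).trans (hB i hi)
    _ = _ := by simp

/-- Squared norm of row `k` truncated at `l`. -/
def rowSq (k l : ℕ) (r : (ℕ × ℕ) × Bool → ℝ) : ℝ :=
  ∑ j ∈ Finset.range l, (r ((k, j), true) ^ 2 + r ((k, j), false) ^ 2)

/-- Squared modulus of the inner product of row `k` of `r` and row `t` of `r'`. -/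
def rowT (k l : ℕ) (r : (ℕ × ℕ) × Bool → ℝ) (t : ℕ) (r' : (ℕ × ℕ) × Bool → ℝ) : ℝ :=
  (∑ j ∈ Finset.range l, (r ((k, j), true) * r' ((t, j), true)
    + r ((k, j), false) * r' ((t, j), false))) ^ 2 +
  (∑ j ∈ Finset.range l, (r ((k, j), false) * r' ((t, j), true)
    + - r ((k, j), true) * r' ((t, j), false))) ^ 2

lemma rowSq_nonneg (k l : ℕ) (r : (ℕ × ℕ) × Bool → ℝ) : 0 ≤ rowSq k l r :=
  Finset.sum_nonneg fun j _ => by positivity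

/-- The finite index set of a set of rows. -/
def rowIdx (s : Finset ℕ) (l : ℕ) : Finset ((ℕ × ℕ) × Bool) :=
  (s ×ˢ Finset.range l) ×ˢ Finset.univ

lemma sum_rowIdx (t l : ℕ) (f : (ℕ × ℕ) × Bool → ℝ) :
    ∑ p ∈ rowIdx {t} l, f p = ∑ j ∈ Finset.range l, (f ((t, j), true) + f ((t, j), false)) := by
  simp [rowIdx, Finset.sum_product]

lemma card_rowIdx (t l : ℕ) : (rowIdx {t} l).card = 2 * l := by
  simp [rowIdx, Finset.card_product, mul_comm]

lemma rowIdx_disjoint {s t : Finset ℕ} (h : Disjoint s t) (l : ℕ) :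
    Disjoint (rowIdx s l) (rowIdx t l) := by
  rw [Finset.disjoint_left] at h ⊢
  rintro ⟨⟨i, j⟩, b⟩ h1 h2
  simp only [rowIdx, Finset.mem_product] at h1 h2
  exact h h1.1.1 h2.1.1

lemma measurable_rowSq (k l : ℕ) : Measurable (rowSq k l) := by
  unfold rowSq; fun_prop

lemma measurable_rowT (k l t : ℕ) :
    Measurable (fun q : ((ℕ × ℕ) × Bool → ℝ) × ((ℕ × ℕ) × Bool → ℝ) => rowT k l q.1 t q.2) := by
  unfold rowT; fun_prop

lemma measurable_rowT_right (k l t : ℕ) (r : (ℕ × ℕ) × Bool → ℝ) :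
    Measurable (fun q : (ℕ × ℕ) × Bool → ℝ => rowT k l r t q) := by
  unfold rowT; fun_prop

lemma measurable_rowSq_ev {Ω : Type*} [MeasurableSpace Ω] {ξ : (ℕ × ℕ) × Bool → Ω → ℝ}
    (hm : ∀ i, Measurable (ξ i)) (k l : ℕ) : Measurable (fun ω => rowSq k l (fun p => ξ p ω)) := by
  unfold rowSq; fun_prop

lemma measurable_rowT_ev {Ω : Type*} [MeasurableSpace Ω] {ξ : (ℕ × ℕ) × Bool → Ω → ℝ}
    (hm : ∀ i, Measurable (ξ i)) (k l t : ℕ) :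
    Measurable (fun ω => rowT k l (fun p => ξ p ω) t (fun p => ξ p ω)) := by
  unfold rowT; fun_prop

lemma rowSq_congr {k l : ℕ} {s : Finset ℕ} (hk : k ∈ s) (r : (ℕ × ℕ) × Bool → ℝ) :
    rowSq k l (fun p => if p ∈ rowIdx s l then r p else 0) = rowSq k l r := by
  refine Finset.sum_congr rfl fun j hj => ?_
  have : ∀ b, ((k, j), b) ∈ rowIdx s l := by
    intro b; simp only [rowIdx, Finset.mem_product, Finset.mem_univ]; exact ⟨⟨hk, hj⟩, trivial⟩
  simp [this]

lemma rowT_congr {k l t : ℕ} {s s' : Finset ℕ} (hk : k ∈ s) (ht : t ∈ s')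
    (r r' : (ℕ × ℕ) × Bool → ℝ) :
    rowT k l (fun p => if p ∈ rowIdx s l then r p else 0) t
      (fun p => if p ∈ rowIdx s' l then r' p else 0) = rowT k l r t r' := by
  have h1 : ∀ j ∈ Finset.range l, ∀ b, ((k, j), b) ∈ rowIdx s l := by
    intro j hj b; simp only [rowIdx, Finset.mem_product, Finset.mem_univ]; exact ⟨⟨hk, hj⟩, trivial⟩
  have h2 : ∀ j ∈ Finset.range l, ∀ b, ((t, j), b) ∈ rowIdx s' l := by
    intro j hj b; simp only [rowIdx, Finset.mem_product, Finset.mem_univ]; exact ⟨⟨ht, hj⟩, trivial⟩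
  unfold rowT
  congr 2
  · refine Finset.sum_congr rfl fun j hj => ?_
    simp [h1 j hj, h2 j hj]
  · refine Finset.sum_congr rfl fun j hj => ?_
    simp [h1 j hj, h2 j hj]

lemma rowT_congr_right {k l t : ℕ} {s' : Finset ℕ} (ht : t ∈ s')
    (r r' : (ℕ × ℕ) × Bool → ℝ) :
    rowT k l r t (fun p => if p ∈ rowIdx s' l then r' p else 0) = rowT k l r t r' := by
  have h2 : ∀ j ∈ Finset.range l, ∀ b, ((t, j), b) ∈ rowIdx s' l := by
    intro j hj b; simp only [rowIdx, Finset.mem_product, Finset.mem_univ]; exact ⟨⟨ht, hj⟩, trivial⟩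
  unfold rowT
  congr 2
  · refine Finset.sum_congr rfl fun j hj => ?_
    simp [h2 j hj]
  · refine Finset.sum_congr rfl fun j hj => ?_
    simp [h2 j hj]

section main
variable {Ω : Type*} [MeasurableSpace Ω] {P : Measure Ω} [IsProbabilityMeasure P]
  {ξ : (ℕ × ℕ) × Bool → Ω → ℝ}

lemma rowT_moments (hm : ∀ i, Measurable (ξ i)) (hi : iIndepFun ξ P)
    (hg : ∀ i, Measure.map (ξ i) P = gaussianReal 0 (1 / 2 : ℝ≥0)) (k l t : ℕ)
    (r : (ℕ × ℕ) × Bool → ℝ) :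
    MemLp (fun ω => rowT k l r t (fun p => ξ p ω)) 2 P ∧
    ∫ ω, rowT k l r t (fun p => ξ p ω) ∂P = rowSq k l r ∧
    ∫ ω, rowT k l r t (fun p => ξ p ω) ^ 2 ∂P ≤ gK * rowSq k l r ^ 2 := by
  obtain ⟨v, hv, hl⟩ := gaussian_comb hm hi hg (rowIdx {t} l)
    (fun p => if p.2 then r ((k, p.1.2), true) else r ((k, p.1.2), false))
  obtain ⟨w, hw, hl'⟩ := gaussian_comb hm hi hg (rowIdx {t} l)
    (fun p => if p.2 then r ((k, p.1.2), false) else - r ((k, p.1.2), true))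
  simp only [sum_rowIdx, if_true, Bool.false_eq_true, if_false] at hv hl hw hl'
  have hv' : (v : ℝ) = rowSq k l r / 2 := hv
  have hw' : (w : ℝ) = rowSq k l r / 2 := by
    rw [hw, rowSq]; congr 1
    refine Finset.sum_congr rfl fun j _ => by ring
  obtain ⟨a1, a2, a3⟩ := gaussian_moments (by fun_prop) hl
  obtain ⟨b1, b2, b3⟩ := gaussian_moments (by fun_prop) hl'
  refine ⟨a3.add b3, ?_, ?_⟩
  · unfold rowT
    rw [integral_add (a3.integrable (by norm_num)) (b3.integrable (by norm_num)), a1, b1, hv', hw']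
    ring
  · have hsum := (a3.add b3).integrable_sq
    have i1 := a3.integrable_sq
    have i2 := b3.integrable_sq
    have : ∫ ω, rowT k l r t (fun p => ξ p ω) ^ 2 ∂P ≤ 2 * (gK * v ^ 2) + 2 * (gK * w ^ 2) := by
      rw [← a2, ← b2, ← integral_const_mul, ← integral_const_mul,
        ← integral_add (i1.const_mul 2) (i2.const_mul 2)]
      refine integral_mono hsum ((i1.const_mul 2).add (i2.const_mul 2)) fun ω => ?_
      simp only [rowT]
      generalize (∑ j ∈ Finset.range l, (r ((k, j), true) * ξ ((t, j), true) ω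
        + r ((k, j), false) * ξ ((t, j), false) ω)) ^ 2 = A
      generalize (∑ j ∈ Finset.range l, (r ((k, j), false) * ξ ((t, j), true) ω
        + - r ((k, j), true) * ξ ((t, j), false) ω)) ^ 2 = B
      nlinarith [sq_nonneg (A - B)]
    rw [hv', hw'] at this
    linarith

lemma sumT_fixed (hm : ∀ i, Measurable (ξ i)) (hi : iIndepFun ξ P)
    (hg : ∀ i, Measure.map (ξ i) P = gaussianReal 0 (1 / 2 : ℝ≥0)) (k l : ℕ)
    (s : Finset ℕ) (r : (ℕ × ℕ) × Bool → ℝ) :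
    MemLp (fun ω => (∑ t ∈ s, rowT k l r t (fun p => ξ p ω)) - s.card * rowSq k l r) 2 P ∧
    ∫ ω, ((∑ t ∈ s, rowT k l r t (fun p => ξ p ω)) - s.card * rowSq k l r) ^ 2 ∂P
      ≤ s.card * (gK * rowSq k l r ^ 2) := by
  refine sum_var (V := fun t ω => rowT k l r t (fun p => ξ p ω)) s (fun t _ => (rowT_moments hm hi hg k l t r).1) ?_
    (rowSq k l r) (gK * rowSq k l r ^ 2) (fun t _ => (rowT_moments hm hi hg k l t r).2.1)
    (fun t _ => (rowT_moments hm hi hg k l t r).2.2)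
  intro t _ t' _ htt'
  have h := indep_ext hm hi (rowIdx {t} l) (rowIdx {t'} l)
    (rowIdx_disjoint (by simpa using htt') l)
  have h2 := h.comp (φ := fun q => rowT k l r t q) (ψ := fun q => rowT k l r t' q)
    (measurable_rowT_right k l t r) (measurable_rowT_right k l t' r)
  convert h2 using 1
  · ext ω
    exact (rowT_congr_right (Finset.mem_singleton_self t) r (fun p => ξ p ω)).symm
  · ext ω
    exact (rowT_congr_right (Finset.mem_singleton_self t') r (fun p => ξ p ω)).symm

lemma sumT_random (hm : ∀ i, Measurable (ξ i)) (hi : iIndepFun ξ P)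
    (hg : ∀ i, Measure.map (ξ i) P = gaussianReal 0 (1 / 2 : ℝ≥0)) (k l : ℕ)
    (s : Finset ℕ) (hk : k ∉ s) :
    ∫⁻ ω, ENNReal.ofReal (((∑ t ∈ s, rowT k l (fun p => ξ p ω) t (fun p => ξ p ω))
        - s.card * rowSq k l (fun p => ξ p ω)) ^ 2) ∂P
      ≤ ∫⁻ ω, ENNReal.ofReal (s.card * (gK * rowSq k l (fun p => ξ p ω) ^ 2)) ∂P := by
  have h := indep_ext hm hi (rowIdx {k} l) (rowIdx s l) (rowIdx_disjoint (by simpa using hk) l)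
  have mA : ∀ s, Measurable (fun ω p => if p ∈ rowIdx s l then ξ p ω else 0) := by
    intro s
    refine measurable_pi_lambda _ fun p => ?_
    split_ifs
    · exact hm p
    · exact measurable_const
  rw [indepFun_iff_map_prod_eq_prod_map_map (mA _).aemeasurable (mA _).aemeasurable] at h
  set A : Ω → (ℕ × ℕ) × Bool → ℝ := fun ω p => if p ∈ rowIdx {k} l then ξ p ω else 0 with hA
  set B : Ω → (ℕ × ℕ) × Bool → ℝ := fun ω p => if p ∈ rowIdx s l then ξ p ω else 0 with hB
  let F : ((ℕ × ℕ) × Bool → ℝ) × ((ℕ × ℕ) × Bool → ℝ) → ENNReal := fun q =>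
    ENNReal.ofReal (((∑ t ∈ s, rowT k l q.1 t q.2) - s.card * rowSq k l q.1) ^ 2)
  have mF : Measurable F := by
    refine ENNReal.measurable_ofReal.comp (Measurable.pow_const (Measurable.sub ?_ ?_) 2)
    · exact Finset.measurable_fun_sum s fun t _ => measurable_rowT k l t
    · exact ((measurable_rowSq k l).comp measurable_fst).const_mul _
  have e1 : ∀ ω, rowSq k l (A ω) = rowSq k l (fun p => ξ p ω) := fun ω =>
    rowSq_congr (Finset.mem_singleton_self k) (fun p => ξ p ω)
  calc _ = ∫⁻ ω, F (A ω, B ω) ∂P := by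
        refine lintegral_congr fun ω => ?_
        simp only [F, e1]
        congr 3
        refine Finset.sum_congr rfl fun t ht => ?_
        exact (rowT_congr (Finset.mem_singleton_self k) ht (fun p => ξ p ω) (fun p => ξ p ω)).symm
    _ = ∫⁻ q, F q ∂(P.map (fun ω => (A ω, B ω))) := by
        rw [lintegral_map mF ((mA _).prodMk (mA _))]
    _ = ∫⁻ a, ∫⁻ b, F (a, b) ∂(P.map B) ∂(P.map A) := by
        have : IsProbabilityMeasure (P.map A) := Measure.isProbabilityMeasure_map (mA _).aemeasurable
        have : IsProbabilityMeasure (P.map B) := Measure.isProbabilityMeasure_map (mA _).aemeasurable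
        rw [h, lintegral_prod _ mF.aemeasurable]
    _ ≤ ∫⁻ a, ENNReal.ofReal (s.card * (gK * rowSq k l a ^ 2)) ∂(P.map A) := by
        refine lintegral_mono fun a => ?_
        have mFa : Measurable (fun b => F (a, b)) := mF.comp measurable_prodMk_left
        rw [lintegral_map mFa (mA _)]
        obtain ⟨h1, h2⟩ := sumT_fixed hm hi hg k l s a
        refine le_trans (le_of_eq ?_) (ENNReal.ofReal_le_ofReal h2)
        rw [ofReal_integral_eq_lintegral_ofReal h1.integrable_sq (ae_of_all _ fun ω => sq_nonneg _)]
        refine lintegral_congr fun ω => ?_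
        simp only [F]
        congr 3
        refine Finset.sum_congr rfl fun t ht => ?_
        exact rowT_congr_right ht a (fun p => ξ p ω)
    _ = _ := by
        rw [lintegral_map _ (mA _)]
        · refine lintegral_congr fun ω => ?_
          rw [← e1]
        · exact ENNReal.measurable_ofReal.comp
            ((((measurable_rowSq k l).pow_const 2).const_mul _).const_mul _)

lemma rowSq_moments (hm : ∀ i, Measurable (ξ i)) (hi : iIndepFun ξ P)
    (hg : ∀ i, Measure.map (ξ i) P = gaussianReal 0 (1 / 2 : ℝ≥0)) (k l : ℕ) :
    MemLp (fun ω => rowSq k l (fun p => ξ p ω) - l) 2 P ∧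
    ∫ ω, (rowSq k l (fun p => ξ p ω) - l) ^ 2 ∂P ≤ gK * l := by
  have hmo := fun p => gaussian_moments (hm p) (hg p)
  have := sum_var (V := fun p ω => ξ p ω ^ 2) (rowIdx {k} l) (fun p _ => (hmo p).2.2)
    (fun p _ q _ hpq => (hi.indepFun hpq).comp (φ := fun x => x ^ 2) (ψ := fun x => x ^ 2)
      (by fun_prop) (by fun_prop)) (1 / 2) (gK / 4) (fun p _ => by rw [(hmo p).1]; norm_num)
      (fun p _ => le_of_eq (by rw [(hmo p).2.1]; norm_num; ring))
  have e : ∀ ω, (∑ p ∈ rowIdx {k} l, ξ p ω ^ 2) - (rowIdx {k} l).card * (1 / 2)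
      = rowSq k l (fun p => ξ p ω) - l := by
    intro ω
    rw [sum_rowIdx, card_rowIdx, rowSq]; push_cast; ring
  simp_rw [e] at this
  refine ⟨this.1, this.2.trans ?_⟩
  rw [card_rowIdx]; push_cast
  nlinarith [gK_nonneg, mul_nonneg gK_nonneg (Nat.cast_nonneg (α := ℝ) l)]

lemma abs_le_sqrt {Z : Ω → ℝ} (hZ : MemLp Z 2 P) {B : ℝ} (hB : ∫ ω, Z ω ^ 2 ∂P ≤ B) :
    ∫ ω, |Z ω| ∂P ≤ Real.sqrt B := by
  apply Real.le_sqrt_of_sq_le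
  have h1 := variance_eq_sub (μ := P) hZ.abs
  have h2 := variance_nonneg (fun ω => |Z ω|) P
  have h3 : ∫ ω, ((fun ω => |Z ω|) ^ 2) ω ∂P = ∫ ω, Z ω ^ 2 ∂P := by simp
  have h4 : Var[|Z|; P] = Var[fun ω => |Z ω|; P] := rfl
  change Var[|Z|; P] = ∫ ω, ((fun ω => |Z ω|) ^ 2) ω ∂P - (∫ ω, |Z ω| ∂P) ^ 2 at h1
  linarith

lemma sumT_L2 (hm : ∀ i, Measurable (ξ i)) (hi : iIndepFun ξ P)
    (hg : ∀ i, Measure.map (ξ i) P = gaussianReal 0 (1 / 2 : ℝ≥0)) (k l : ℕ)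
    (s : Finset ℕ) (hk : k ∉ s) :
    MemLp (fun ω => (∑ t ∈ s, rowT k l (fun p => ξ p ω) t (fun p => ξ p ω))
        - s.card * rowSq k l (fun p => ξ p ω)) 2 P ∧
    ∫ ω, ((∑ t ∈ s, rowT k l (fun p => ξ p ω) t (fun p => ξ p ω))
        - s.card * rowSq k l (fun p => ξ p ω)) ^ 2 ∂P ≤
      s.card * (gK * (2 * gK * l + 2 * l ^ 2)) := by
  have hr := sumT_random hm hi hg k l s hk
  obtain ⟨q1, q2⟩ := rowSq_moments hm hi hg k l
  have mZ : Measurable (fun ω => (∑ t ∈ s, rowT k l (fun p => ξ p ω) t (fun p => ξ p ω))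
        - s.card * rowSq k l (fun p => ξ p ω)) := by
    refine Measurable.sub ?_ ?_
    · exact Finset.measurable_fun_sum s fun t _ => measurable_rowT_ev hm k l t
    · exact (measurable_rowSq_ev hm k l).const_mul _
  have i0 : Integrable (fun ω => 2 * (rowSq k l (fun p => ξ p ω) - l) ^ 2 + 2 * (l : ℝ) ^ 2) P :=
    (q1.integrable_sq.const_mul 2).add (integrable_const _)
  have hle : ∫⁻ ω, ENNReal.ofReal (s.card * (gK * rowSq k l (fun p => ξ p ω) ^ 2)) ∂P
      ≤ ENNReal.ofReal (s.card * (gK * (2 * gK * l + 2 * l ^ 2))) := by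
    calc _ ≤ ∫⁻ ω, ENNReal.ofReal (s.card * (gK *
          (2 * (rowSq k l (fun p => ξ p ω) - l) ^ 2 + 2 * (l : ℝ) ^ 2))) ∂P := by
          refine lintegral_mono fun ω => ENNReal.ofReal_le_ofReal ?_
          have := gK_nonneg
          gcongr
          nlinarith [sq_nonneg (rowSq k l (fun p => ξ p ω) - 2 * l)]
      _ = ENNReal.ofReal (∫ ω, s.card * (gK *
          (2 * (rowSq k l (fun p => ξ p ω) - l) ^ 2 + 2 * (l : ℝ) ^ 2)) ∂P) := by
          rw [ofReal_integral_eq_lintegral_ofReal ((i0.const_mul _).const_mul _)]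
          refine ae_of_all _ fun ω => ?_
          have := gK_nonneg
          simp only [Pi.zero_apply]
          positivity
      _ ≤ _ := by
          refine ENNReal.ofReal_le_ofReal ?_
          rw [integral_const_mul, integral_const_mul,
            integral_add (q1.integrable_sq.const_mul 2) (integrable_const _), integral_const_mul]
          have := gK_nonneg
          refine mul_le_mul_of_nonneg_left (mul_le_mul_of_nonneg_left ?_ this) (by positivity)
          simp only [integral_const, probReal_univ, one_smul]
          linarith
  have hfin := hr.trans hle
  have hint : Integrable (fun ω => ((∑ t ∈ s, rowT k l (fun p => ξ p ω) t (fun p => ξ p ω))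
        - s.card * rowSq k l (fun p => ξ p ω)) ^ 2) P := by
    refine ⟨(mZ.pow_const 2).aestronglyMeasurable, ?_⟩
    rw [hasFiniteIntegral_iff_ofReal (ae_of_all _ fun ω => sq_nonneg _)]
    exact hfin.trans_lt ENNReal.ofReal_lt_top
  refine ⟨(memLp_two_iff_integrable_sq mZ.aestronglyMeasurable).2 hint, ?_⟩
  rw [← ofReal_integral_eq_lintegral_ofReal hint (ae_of_all _ fun ω => sq_nonneg _)] at hfin
  refine (ENNReal.ofReal_le_ofReal_iff ?_).1 hfin
  have := gK_nonneg
  positivity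

end main

lemma log_lip {x y : ℝ} (hx : 1 ≤ x) (hy : 1 ≤ y) : |Real.log x - Real.log y| ≤ |x - y| := by
  have key : ∀ {x y : ℝ}, 1 ≤ x → 1 ≤ y → y ≤ x → Real.log x - Real.log y ≤ x - y := by
    intro x y hx hy hxy
    have hx0 : 0 < x := by linarith
    have hy0 : 0 < y := by linarith
    rw [← Real.log_div hx0.ne' hy0.ne']
    have h1 := Real.log_le_sub_one_of_pos (div_pos hx0 hy0)
    have h2 : x / y - 1 = (x - y) / y := by field_simp
    rw [h2] at h1
    exact h1.trans (div_le_self (by linarith) hy)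
  rcases le_total y x with h | h
  · rw [abs_of_nonneg (sub_nonneg.2 (Real.log_le_log (by linarith) h)), abs_of_nonneg (by linarith)]
    exact key hx hy h
  · rw [abs_sub_comm, abs_sub_comm x y, 
      abs_of_nonneg (sub_nonneg.2 (Real.log_le_log (by linarith) h)), abs_of_nonneg (by linarith)]
    exact key hy hx h

lemma log_ratio_bound {X Y a b : ℝ} (hX : 0 ≤ X) (hY : 1 ≤ Y) (ha : 0 ≤ a) (hb : 1 ≤ b) :
    |Real.log (1 + X / Y) - Real.log (1 + a / b)| ≤ |X - a| + 2 * |Y - b| := by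
  have e : ∀ {X Y : ℝ}, 0 ≤ X → 1 ≤ Y → Real.log (1 + X / Y) = Real.log (Y + X) - Real.log Y := by
    intro X Y hX hY
    rw [← Real.log_div (by linarith) (by linarith)]
    congr 1
    have : Y ≠ 0 := by linarith
    field_simp
  rw [e hX hY, e ha hb]
  have h1 := log_lip (x := Y + X) (y := b + a) (by linarith) (by linarith)
  have h2 := log_lip hY hb
  have h3 : |Y + X - (b + a)| ≤ |X - a| + |Y - b| := by
    rw [show Y + X - (b + a) = (X - a) + (Y - b) by ring]; exact abs_add_le _ _
  have h4 : |Real.log (Y + X) - Real.log Y - (Real.log (b + a) - Real.log b)| ≤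
      |Real.log (Y + X) - Real.log (b + a)| + |Real.log Y - Real.log b| := by
    rw [show Real.log (Y + X) - Real.log Y - (Real.log (b + a) - Real.log b) =
      (Real.log (Y + X) - Real.log (b + a)) - (Real.log Y - Real.log b) by ring]
    exact abs_sub _ _
  linarith

lemma pointwise_bound {Pt c S W l Q n : ℝ} (hPt : 0 < Pt) (hc : 0 < c) (hl : 0 < l) (hQ : 0 < Q)
    (hn0 : 0 ≤ n) (hn : n ≤ Q) (hn' : Q ≤ n + 1) (hW : 0 ≤ W) :
    |Real.log (1 + (Pt / (Q * l) * S ^ 2) / (1 + Pt / (Q * l) * W))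
      - Real.log (1 + 1 / c * (Pt / (Pt + 1)))| ≤
    Pt * (l / Q) * (((S - l) / l) ^ 2 + 2 * |(S - l) / l|) + |Pt * (l / Q) - Pt / c|
      + 2 * Pt * (|(W - n * S) / (Q * l)| + |(S - l) / l| + 1 / Q) := by
  have h0 : 1 / c * (Pt / (Pt + 1)) = (Pt / c) / (1 + Pt) := by
    field_simp
    ring
  rw [h0]
  refine (log_ratio_bound (by positivity) (by have : 0 ≤ Pt / (Q * l) * W := by positivity
                                              linarith) (by positivity) (by linarith)).trans ?_
  set d := (S - l) / l with hd
  have hS : S = l * (1 + d) := by rw [hd]; field_simp; ring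
  have h1 : |Pt / (Q * l) * S ^ 2 - Pt / c| ≤
      Pt * (l / Q) * (d ^ 2 + 2 * |d|) + |Pt * (l / Q) - Pt / c| := by
    have : Pt / (Q * l) * S ^ 2 - Pt / c
        = Pt * (l / Q) * (d ^ 2 + 2 * d) + (Pt * (l / Q) - Pt / c) := by
      rw [hS]; field_simp; ring
    rw [this]
    refine (abs_add_le _ _).trans ?_
    have : |Pt * (l / Q) * (d ^ 2 + 2 * d)| ≤ Pt * (l / Q) * (d ^ 2 + 2 * |d|) := by
      rw [abs_mul, abs_of_nonneg (by positivity : 0 ≤ Pt * (l / Q))]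
      refine mul_le_mul_of_nonneg_left ?_ (by positivity)
      refine (abs_add_le _ _).trans ?_
      rw [abs_mul, abs_of_nonneg (sq_nonneg d), abs_two]
    linarith
  have h2 : |1 + Pt / (Q * l) * W - (1 + Pt)| ≤ Pt * (|(W - n * S) / (Q * l)| + |d| + 1 / Q) := by
    have : 1 + Pt / (Q * l) * W - (1 + Pt)
        = Pt * ((W - n * S) / (Q * l) + (n / Q * d + (n - Q) / Q)) := by
      rw [hS]; field_simp; ring
    rw [this, abs_mul, abs_of_pos hPt]
    refine mul_le_mul_of_nonneg_left ?_ hPt.le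
    have e1 := abs_add_le ((W - n * S) / (Q * l)) (n / Q * d + (n - Q) / Q)
    have e2 := abs_add_le (n / Q * d) ((n - Q) / Q)
    have e3 : |n / Q * d| ≤ |d| := by
      rw [abs_mul, abs_of_nonneg (by positivity : 0 ≤ n / Q)]
      exact mul_le_of_le_one_left (abs_nonneg _) ((div_le_one hQ).2 hn)
    have e4 : |(n - Q) / Q| ≤ 1 / Q := by
      rw [abs_div, abs_of_pos hQ]
      gcongr
      rw [abs_le]; constructor <;> linarith
    linarith
  linarith

lemma expect_bound {Ω : Type*} [MeasurableSpace Ω] {P : Measure Ω} [IsProbabilityMeasure P]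
    {ξ : (ℕ × ℕ) × Bool → Ω → ℝ} (hm : ∀ i, Measurable (ξ i)) (hi : iIndepFun ξ P)
    (hg : ∀ i, Measure.map (ξ i) P = gaussianReal 0 (1 / 2 : ℝ≥0)) (k l Q : ℕ)
    {Pt c : ℝ} (hPt : 0 < Pt) (hc : 0 < c) (hl : 0 < l) (hQ : 0 < Q)
    (s : Finset ℕ) (hk : k ∉ s) (hn : s.card ≤ Q) (hn' : Q ≤ s.card + 1) :
    |(∫ ω, Real.log (1 + (Pt / (Q * l) * rowSq k l (fun p => ξ p ω) ^ 2) / (1 + Pt / (Q * l) *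
        ∑ t ∈ s, rowT k l (fun p => ξ p ω) t (fun p => ξ p ω))) ∂P)
      - Real.log (1 + 1 / c * (Pt / (Pt + 1)))| ≤
    Pt * (l / Q) * (gK / l + 2 * Real.sqrt (gK / l)) + |Pt * (l / Q) - Pt / c|
      + 2 * Pt * (Real.sqrt (gK * (2 * gK + 2) / Q) + Real.sqrt (gK / l) + 1 / Q) := by
  have hl0 : (0 : ℝ) < l := by exact_mod_cast hl
  have hl1 : (1 : ℝ) ≤ l := by exact_mod_cast hl
  have hQ0 : (0 : ℝ) < Q := by exact_mod_cast hQ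
  have hnR : (s.card : ℝ) ≤ Q := by exact_mod_cast hn
  have hnR' : (Q : ℝ) ≤ s.card + 1 := by exact_mod_cast hn'
  have hK := gK_nonneg
  obtain ⟨q1, q2⟩ := rowSq_moments hm hi hg k l
  obtain ⟨t1, t2⟩ := sumT_L2 hm hi hg k l s hk
  have mS := measurable_rowSq_ev hm k l
  have mW : Measurable (fun ω => ∑ t ∈ s, rowT k l (fun p => ξ p ω) t (fun p => ξ p ω)) :=
    Finset.measurable_fun_sum s fun t _ => measurable_rowT_ev hm k l t
  have hW : ∀ ω, 0 ≤ ∑ t ∈ s, rowT k l (fun p => ξ p ω) t (fun p => ξ p ω) := fun ω =>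
    Finset.sum_nonneg fun t _ => by unfold rowT; positivity
  generalize hSdef : (fun ω => rowSq k l (fun p => ξ p ω)) = S at *
  generalize hWdef : (fun ω => ∑ t ∈ s, rowT k l (fun p => ξ p ω) t (fun p => ξ p ω)) = W at *
  have hS' : ∀ ω, rowSq k l (fun p => ξ p ω) = S ω := fun ω => congrFun hSdef ω
  have hW' : ∀ ω, ∑ t ∈ s, rowT k l (fun p => ξ p ω) t (fun p => ξ p ω) = W ω :=
    fun ω => congrFun hWdef ω
  simp only [hS', hW'] at *
  have m1 : MemLp (fun ω => (S ω - l) / l) 2 P := by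
    simp_rw [div_eq_inv_mul]; exact q1.const_mul _
  have m2 : MemLp (fun ω => (W ω - s.card * S ω) / (Q * l)) 2 P := by
    simp_rw [div_eq_inv_mul _ ((Q : ℝ) * l)]; exact t1.const_mul _
  have b1 : ∫ ω, ((S ω - l) / l) ^ 2 ∂P ≤ gK / l := by
    simp_rw [div_pow]
    rw [integral_div, div_le_iff₀ (by positivity)]
    refine q2.trans (le_of_eq ?_)
    field_simp
  have b2 : ∫ ω, ((W ω - s.card * S ω) / (Q * l)) ^ 2 ∂P ≤ gK * (2 * gK + 2) / Q := by
    simp_rw [div_pow]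
    rw [integral_div, div_le_iff₀ (by positivity)]
    refine t2.trans ?_
    have e : gK * (2 * gK + 2) / Q * (Q * l) ^ 2 = Q * (gK * (2 * gK * l ^ 2 + 2 * l ^ 2)) := by
      field_simp
    rw [e]
    gcongr
    nlinarith
  have a1 := abs_le_sqrt m1 b1
  have a2 := abs_le_sqrt m2 b2
  have i1 := m1.integrable_sq
  have i2 := (m1.integrable (by norm_num)).abs
  have i3 := (m2.integrable (by norm_num)).abs
  have pb := fun ω => pointwise_bound (S := S ω) hPt hc hl0 hQ0 (Nat.cast_nonneg s.card) hnR hnR' (hW ω)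
  set f := fun ω => Real.log (1 + (Pt / (Q * l) * S ω ^ 2) / (1 + Pt / (Q * l) * W ω)) with hf
  have mf : Measurable f := by fun_prop
  have iA := ((i1.add (i2.const_mul 2)).const_mul (Pt * ((l : ℝ) / Q))).add
    (integrable_const (μ := P) |Pt * ((l : ℝ) / Q) - Pt / c|)
  have iB := ((i3.add i2).add (integrable_const (μ := P) (1 / (Q : ℝ)))).const_mul (2 * Pt)
  have id : Integrable (fun ω => f ω - Real.log (1 + 1 / c * (Pt / (Pt + 1)))) P :=
    (iA.add iB).mono' (mf.sub_const _).aestronglyMeasurable (ae_of_all _ fun ω => pb ω)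
  have iF : Integrable f P := by
    have := id.add (integrable_const (Real.log (1 + 1 / c * (Pt / (Pt + 1)))))
    refine this.congr (ae_of_all _ fun ω => ?_)
    simp
  have e1 : (∫ ω, f ω ∂P) - Real.log (1 + 1 / c * (Pt / (Pt + 1)))
      = ∫ ω, (f ω - Real.log (1 + 1 / c * (Pt / (Pt + 1)))) ∂P := by
    rw [integral_sub iF (integrable_const _)]; simp
  rw [e1]
  refine (abs_integral_le_integral_abs).trans ((integral_mono id.abs (iA.add iB) fun ω => pb ω).trans ?_)
  rw [integral_add' iA iB, integral_add' ((i1.add (i2.const_mul 2)).const_mul _) (integrable_const _),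
    integral_const_mul, integral_add' i1 (i2.const_mul 2), integral_const_mul, integral_const_mul,
    integral_add' (i3.add i2) (integrable_const _), integral_add' i3 i2]
  simp only [integral_const, probReal_univ, one_smul]
  gcongr

/-- Cacheless MF-based MISO BC. With `Q_L = ⌈c'L⌉`, rows `h_ϑ` of an i.i.d.
standard complex Gaussian `Q_L×L` matrix, `X_L = (P_t/(Q_L·L))‖h_k‖⁴` and
`Y_L = 1 + (P_t/(Q_L·L))·Σ_{ϑ≠k}|h_kᵀh_ϑ*|²`, it holds that
`E[ln(1+X_L/Y_L)] → ln(1 + (1/c')·P_t/(P_t+1))`; equivalently, the average sum-rate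
`R̄^{MF}(1,c'L) = c'·L·E[ln(1+X_L/Y_L)]` satisfies
`R̄^{MF}(1,c'L)/(c'L) → ln(1 + (1/c')·P_t/(P_t+1))`. -/
theorem stmt_1 {Ω : Type*} [MeasurableSpace Ω] (P : Measure Ω) [IsProbabilityMeasure P]
    (Pt : ℝ) (hPt : 0 < Pt) (c' : ℝ) (hc' : 0 < c')
    (g : ℕ → ℕ → Ω → ℂ) (hmeas : ∀ i j, Measurable (g i j))
    (hgauss : IsStdComplexGaussianFamily P (fun p : ℕ × ℕ => g p.1 p.2)) (k : ℕ) :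
    let QL : ℕ → ℕ := fun l => Nat.ceil (c' * l)
    let X : ℕ → Ω → ℝ := fun l ω =>
      Pt / (QL l * l) * (∑ j ∈ Finset.range l, Complex.normSq (g k j ω)) ^ 2
    let Y : ℕ → Ω → ℝ := fun l ω =>
      1 + Pt / (QL l * l) *
        ∑ ϑ ∈ (Finset.range (QL l)).filter (fun ϑ => ϑ ≠ k),
          Complex.normSq (∑ j ∈ Finset.range l, g k j ω * (starRingEnd ℂ) (g ϑ j ω))
    Filter.Tendsto (fun l : ℕ => ∫ ω, Real.log (1 + X l ω / Y l ω) ∂P)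
      Filter.atTop (nhds (Real.log (1 + 1 / c' * (Pt / (Pt + 1))))) ∧
    Filter.Tendsto
      (fun l : ℕ => (c' * l * ∫ ω, Real.log (1 + X l ω / Y l ω) ∂P) / (c' * l))
      Filter.atTop (nhds (Real.log (1 + 1 / c' * (Pt / (Pt + 1))))) := by
  intro QL X Y
  obtain ⟨hi, hg⟩ := hgauss
  let ξ : (ℕ × ℕ) × Bool → Ω → ℝ := fun p ω => if p.2 then (g p.1.1 p.1.2 ω).re else (g p.1.1 p.1.2 ω).im
  have hm : ∀ p, Measurable (ξ p) := by
    rintro ⟨⟨i, j⟩, b⟩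
    cases b
    · simpa [ξ, Function.comp_def] using Complex.measurable_im.comp (hmeas i j)
    · simpa [ξ, Function.comp_def] using Complex.measurable_re.comp (hmeas i j)
  have hi' : iIndepFun ξ P := hi
  have hg' : ∀ p, Measure.map (ξ p) P = gaussianReal 0 (1 / 2 : ℝ≥0) := hg
  have eX : ∀ l ω, X l ω = Pt / (QL l * l) * rowSq k l (fun p => ξ p ω) ^ 2 := by
    intro l ω
    simp only [X, rowSq, ξ, Complex.normSq_apply, if_true, Bool.false_eq_true, if_false]
    simp only [sq]
  have eY : ∀ l ω, Y l ω = 1 + Pt / (QL l * l) * ∑ t ∈ (Finset.range (QL l)).filter (fun t => t ≠ k),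
      rowT k l (fun p => ξ p ω) t (fun p => ξ p ω) := by
    intro l ω
    simp only [Y]
    congr 2
    refine Finset.sum_congr rfl fun t _ => ?_
    simp only [rowT, ξ, Complex.normSq_apply, if_true, Bool.false_eq_true, if_false,
      Complex.re_sum, Complex.im_sum, Complex.mul_re, Complex.mul_im, Complex.conj_re, Complex.conj_im]
    rw [sq, sq]
    congr 2 <;> refine Finset.sum_congr rfl fun j _ => ?_ <;> ring
  have hQpos : ∀ l : ℕ, 0 < l → 0 < QL l := by
    intro l hl
    have : (0 : ℝ) < l := by exact_mod_cast hl
    exact Nat.ceil_pos.2 (by positivity)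
  have tl : Filter.Tendsto (fun l : ℕ => (l : ℝ)) Filter.atTop Filter.atTop :=
    tendsto_natCast_atTop_atTop
  have tQ : Filter.Tendsto (fun l : ℕ => (QL l : ℝ)) Filter.atTop Filter.atTop :=
    Filter.tendsto_atTop_mono (fun l => Nat.le_ceil _) (tl.const_mul_atTop hc')
  have tr : Filter.Tendsto (fun l : ℕ => (l : ℝ) / QL l) Filter.atTop (nhds (1 / c')) := by
    have := (tendsto_nat_ceil_mul_div_atTop hc'.le).comp tl
    have := this.inv₀ hc'.ne'
    rw [← one_div] at this
    refine this.congr fun l => ?_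
    simp [QL]
  have bound : ∀ l : ℕ, 0 < l → |(∫ ω, Real.log (1 + X l ω / Y l ω) ∂P)
      - Real.log (1 + 1 / c' * (Pt / (Pt + 1)))| ≤
      Pt * (l / QL l) * (gK / l + 2 * Real.sqrt (gK / l)) + |Pt * (l / QL l) - Pt / c'|
      + 2 * Pt * (Real.sqrt (gK * (2 * gK + 2) / QL l) + Real.sqrt (gK / l) + 1 / QL l) := by
    intro l hl
    simp_rw [eX, eY]
    refine expect_bound hm hi' hg' k l (QL l) hPt hc' hl (hQpos l hl) _ (by simp) ?_ ?_
    · exact (Finset.card_filter_le _ _).trans (by simp)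
    · rw [Finset.filter_ne']
      have := Finset.pred_card_le_card_erase (s := Finset.range (QL l)) (a := k)
      rw [Finset.card_range] at this
      omega
  have tlim : Filter.Tendsto (fun l : ℕ =>
      Pt * ((l : ℝ) / QL l) * (gK / l + 2 * Real.sqrt (gK / l)) + |Pt * ((l : ℝ) / QL l) - Pt / c'|
      + 2 * Pt * (Real.sqrt (gK * (2 * gK + 2) / QL l) + Real.sqrt (gK / l) + 1 / QL l))
      Filter.atTop (nhds 0) := by
    have s1 : Filter.Tendsto (fun l : ℕ => gK / (l : ℝ)) Filter.atTop (nhds 0) := tl.const_div_atTop _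
    have s2 : Filter.Tendsto (fun l : ℕ => Real.sqrt (gK / (l : ℝ))) Filter.atTop (nhds 0) := by
      simpa using s1.sqrt
    have s3 : Filter.Tendsto (fun l : ℕ => Real.sqrt (gK * (2 * gK + 2) / (QL l : ℝ)))
        Filter.atTop (nhds 0) := by
      simpa using (tQ.const_div_atTop (gK * (2 * gK + 2))).sqrt
    have s4 : Filter.Tendsto (fun l : ℕ => 1 / (QL l : ℝ)) Filter.atTop (nhds 0) :=
      tQ.const_div_atTop _
    have := (((tr.const_mul Pt).mul (s1.add (s2.const_mul 2))).add
      (((tr.const_mul Pt).sub_const (Pt / c')).abs)).add (((s3.add s2).add s4).const_mul (2 * Pt))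
    have e : Pt * (1 / c') - Pt / c' = 0 := by ring
    rw [e] at this
    simpa using this
  have main : Filter.Tendsto (fun l : ℕ => ∫ ω, Real.log (1 + X l ω / Y l ω) ∂P)
      Filter.atTop (nhds (Real.log (1 + 1 / c' * (Pt / (Pt + 1))))) := by
    rw [tendsto_iff_dist_tendsto_zero]
    refine squeeze_zero' (Filter.Eventually.of_forall fun l => dist_nonneg) ?_ tlim
    filter_upwards [Filter.eventually_gt_atTop 0] with l hl
    rw [Real.dist_eq]
    exact bound l hl
  refine ⟨main, main.congr' ?_⟩
  filter_upwards [Filter.eventually_gt_atTop 0] with l hl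
  have : (0 : ℝ) < l := by exact_mod_cast hl
  rw [mul_div_cancel_left₀ _ (by positivity)]
end

section
/- Let Q < L be positive integers and let H be a Q×L random matrix with i.i.d. standard complex Gaussian entries. Then H H^H is almost surely invertible and E[Tr((H H^H)^{-1})] = Q/(L − Q). -/
open MeasureTheory ProbabilityTheory Matrix
open scoped NNReal

lemma aux_gauss_exp (t : ℝ) (ht : 0 ≤ t) :
    ∫ x, Real.exp (-(t * x ^ 2)) ∂(gaussianReal 0 (1 / 2 : ℝ≥0)) = (√(1 + t))⁻¹ := by
  rw [integral_gaussianReal_eq_integral_smul (by norm_num)]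
  have h : ∀ x : ℝ, gaussianPDFReal 0 (1 / 2 : ℝ≥0) x • Real.exp (-(t * x ^ 2))
      = (√Real.pi)⁻¹ * Real.exp (-(1 + t) * x ^ 2) := by
    intro x
    rw [gaussianPDFReal_def]
    simp only [smul_eq_mul, mul_assoc, ← Real.exp_add]
    congr 2
    · push_cast; congr 1; ring
    · push_cast; ring
  simp_rw [h]
  rw [integral_const_mul, integral_gaussian, Real.sqrt_div Real.pi_pos.le]
  have := Real.sqrt_pos.2 Real.pi_pos
  field_simp

lemma aux_lint_exp (r : ℝ) (hr : 0 ≤ r) :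
    ∫⁻ t in Set.Ioi (0:ℝ), ENNReal.ofReal (Real.exp (-(t * r))) = (ENNReal.ofReal r)⁻¹ := by
  rcases hr.eq_or_lt with rfl | hr
  · simp
  · have h0 : ∀ t : ℝ, -(t * r) = (-r) * t := fun t => by ring
    simp_rw [h0]
    rw [← ofReal_integral_eq_lintegral_ofReal (integrableOn_exp_mul_Ioi (by linarith) 0)
      (Filter.Eventually.of_forall fun t => (Real.exp_pos _).le),
      integral_exp_mul_Ioi (by linarith), ← ENNReal.ofReal_inv_of_pos hr]
    simp

lemma aux_lint_pow (d : ℕ) (hd : 2 ≤ d) :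
    ∫⁻ t in Set.Ioi (0:ℝ), ENNReal.ofReal (((1 + t) ^ d)⁻¹)
      = ENNReal.ofReal (1 / ((d : ℝ) - 1)) := by
  have hd' : (2:ℝ) ≤ d := by exact_mod_cast hd
  have h1 : ∀ t ∈ Set.Ioi (0:ℝ), ENNReal.ofReal (((1 + t) ^ d)⁻¹)
      = ENNReal.ofReal ((t + 1) ^ (-(d:ℝ))) := by
    intro t ht
    have : (0:ℝ) < t := ht
    rw [Real.rpow_neg (by linarith), Real.rpow_natCast, add_comm]
  rw [setLIntegral_congr_fun measurableSet_Ioi h1,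
    ← ofReal_integral_eq_lintegral_ofReal
      (integrableOn_add_rpow_Ioi_of_lt (by linarith) (by linarith))
      ((ae_restrict_iff' measurableSet_Ioi).2 (Filter.Eventually.of_forall fun t ht => by
        have : (0:ℝ) < t := ht
        change (0:ℝ) ≤ _
        positivity))]
  congr 1
  have := (measurePreserving_add_right (volume : Measure ℝ) 1).setIntegral_preimage_emb
    (measurableEmbedding_addRight 1) (fun x => x ^ (-(d:ℝ))) (Set.Ioi 1)
  simp only [Set.preimage_add_const_Ioi, sub_self] at this
  rw [this, integral_Ioi_rpow_of_lt (by linarith) one_pos]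
  rw [Real.one_rpow, ← neg_div_neg_eq]
  ring_nf

section
variable {E : Type*} [NormedAddCommGroup E] [InnerProductSpace ℂ E]
  [MeasurableSpace E] [BorelSpace E] [SecondCountableTopology E]

/-- standard complex Gaussian law, through its characteristic function -/
def IsCG (γ : Measure E) : Prop :=
  ∀ t : E, ∫ x, Complex.exp ((((inner ℂ x t).re : ℝ) : ℂ) * Complex.I) ∂γ
    = Complex.exp (-((‖t‖ ^ 2 : ℝ) : ℂ) / 4)

lemma aux_lint_gauss (γ : Measure E) [IsProbabilityMeasure γ] (hγ : IsCG γ) (d : ℕ)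
    (e : Fin d → E) (he : Orthonormal ℂ e) (t : ℝ) (ht : 0 ≤ t) :
    ∫⁻ x, ENNReal.ofReal (Real.exp (-(t * ∑ j, ‖inner ℂ (e j) x‖ ^ 2))) ∂γ
      = ENNReal.ofReal (((1 + t) ^ d)⁻¹) := by
  let φ : E → (Fin d × Bool → ℝ) := fun x p =>
    if p.2 then (inner ℂ (e p.1) x).re else (inner ℂ (e p.1) x).im
  have hφ : Measurable φ := by
    refine measurable_pi_lambda _ fun p => ?_
    rcases p with ⟨j, b⟩
    cases b
    · change Measurable fun x => (inner ℂ (e j) x).im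
      fun_prop
    · change Measurable fun x => (inner ℂ (e j) x).re
      fun_prop
  have hlaw : γ.map φ = Measure.pi (fun _ => gaussianReal 0 (1 / 2 : ℝ≥0)) := by
    have key : (γ.map φ).map (WithLp.toLp 2)
        = (Measure.pi (fun _ : Fin d × Bool => gaussianReal 0 (1 / 2 : ℝ≥0))).map
          (WithLp.toLp 2) := by
      have : IsProbabilityMeasure (γ.map φ) := Measure.isProbabilityMeasure_map hφ.aemeasurable
      have m2 : Measurable (WithLp.toLp 2 : (Fin d × Bool → ℝ) → _) := by fun_prop
      have : IsProbabilityMeasure ((γ.map φ).map (WithLp.toLp 2)) :=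
        Measure.isProbabilityMeasure_map m2.aemeasurable
      have : IsProbabilityMeasure ((Measure.pi (fun _ : Fin d × Bool =>
          gaussianReal 0 (1 / 2 : ℝ≥0))).map (WithLp.toLp 2)) :=
        Measure.isProbabilityMeasure_map m2.aemeasurable
      apply Measure.ext_of_charFun (E := EuclideanSpace ℝ (Fin d × Bool))
      ext s
      rw [charFun_pi, charFun_apply, integral_map (by fun_prop) (by fun_prop),
        integral_map (by fun_prop) (by fun_prop)]
      simp_rw [charFun_gaussianReal]
      rw [← Complex.exp_sum]
      let c : Fin d → ℂ := fun j => ⟨s (j, true), s (j, false)⟩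
      have h1 : ∀ x, inner ℝ (WithLp.toLp 2 (φ x)) s = (inner ℂ x (∑ j, c j • e j)).re := by
        intro x
        rw [inner_sum, Complex.re_sum, PiLp.inner_apply, Fintype.sum_prod_type]
        refine Finset.sum_congr rfl fun j _ => ?_
        have h5 := inner_conj_symm (𝕜 := ℂ) x (e j)
        rw [inner_smul_right, ← h5]
        simp only [φ, c, Fintype.sum_bool, Complex.mul_re, Complex.conj_re, Complex.conj_im]
        simp
      have h2 : ‖∑ j, c j • e j‖ ^ 2 = ∑ p, s p ^ 2 := by
        rw [← inner_self_eq_norm_sq (𝕜 := ℂ), he.inner_sum, Fintype.sum_prod_type, map_sum]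
        refine Finset.sum_congr rfl fun j _ => ?_
        simp [c]; ring
      simp_rw [h1]
      rw [hγ, h2]
      congr 1
      push_cast
      rw [neg_div, Finset.sum_div, ← Finset.sum_neg_distrib]
      refine Finset.sum_congr rfl fun j _ => ?_
      ring
    have hinj := congrArg (Measure.map (WithLp.ofLp : PiLp 2 (fun _ : Fin d × Bool => ℝ) → _)) key
    rw [Measure.map_map (by fun_prop) (by fun_prop), Measure.map_map (by fun_prop) (by fun_prop)]
      at hinj
    have hid : ((WithLp.ofLp : PiLp 2 (fun _ : Fin d × Bool => ℝ) → _) ∘ WithLp.toLp 2) = id := rfl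
    rw [Measure.map_map (by fun_prop) (by fun_prop), hid,
      Measure.map_id, Function.id_comp] at hinj
    exact hinj
  have h3 : ∀ x, Real.exp (-(t * ∑ j, ‖inner ℂ (e j) x‖ ^ 2))
      = ∏ p, Real.exp (-(t * φ x p ^ 2)) := by
    intro x
    rw [← Real.exp_sum, Finset.sum_neg_distrib, ← Finset.mul_sum, Fintype.sum_prod_type]
    congr 3
    refine Finset.sum_congr rfl fun j _ => ?_
    rw [Complex.sq_norm, Complex.normSq_apply]
    simp [φ]; ring
  rw [← ofReal_integral_eq_lintegral_ofReal]
  · congr 1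
    simp_rw [h3]
    rw [← integral_map (f := fun y : Fin d × Bool → ℝ => ∏ p, Real.exp (-(t * y p ^ 2)))
      hφ.aemeasurable (by
        refine Measurable.aestronglyMeasurable ?_
        fun_prop), hlaw,
      integral_fintype_prod_eq_prod (fun _ x => Real.exp (-(t * x ^ 2)))]
    rw [Finset.prod_congr rfl fun p _ => aux_gauss_exp t ht]
    simp only [Finset.prod_const, Finset.card_univ, Fintype.card_prod, Fintype.card_fin,
      Fintype.card_bool]
    rw [mul_comm, pow_mul, inv_pow, Real.sq_sqrt (by linarith), inv_pow]
  · refine Integrable.of_bound (C := 1) (by fun_prop) (Filter.Eventually.of_forall fun x => ?_)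
    rw [Real.norm_eq_abs, Real.abs_exp, Real.exp_le_one_iff]
    have : 0 ≤ ∑ j, ‖inner ℂ (e j) x‖ ^ 2 := by positivity
    nlinarith [mul_nonneg ht this]
  · exact Filter.Eventually.of_forall fun t => (Real.exp_pos _).le

lemma aux_lint_inv [FiniteDimensional ℂ E] (γ : Measure E) [IsProbabilityMeasure γ]
    (hγ : IsCG γ) (K : Submodule ℂ E) (hd : 2 ≤ Module.finrank ℂ K) :
    ∫⁻ x, (ENNReal.ofReal (‖K.starProjection x‖ ^ 2))⁻¹ ∂γ
      = ENNReal.ofReal (1 / ((Module.finrank ℂ K : ℝ) - 1)) := by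
  let b := stdOrthonormalBasis ℂ K
  have hb : Orthonormal ℂ (fun j => (b j : E)) :=
    b.orthonormal.comp_linearIsometry K.subtypeₗᵢ
  have hn : ∀ x, ‖K.starProjection x‖ ^ 2 = ∑ j, ‖inner ℂ (b j : E) x‖ ^ 2 := by
    intro x
    rw [Submodule.starProjection_apply, ← Submodule.coe_norm, ← b.sum_sq_norm_inner_right]
    refine Finset.sum_congr rfl fun j _ => ?_
    rw [← Submodule.inner_orthogonalProjectionOnto_eq_of_mem_left]
  simp_rw [hn]
  rw [← aux_lint_pow _ hd]
  have h1 : ∀ x, (ENNReal.ofReal (∑ j, ‖inner ℂ (b j : E) x‖ ^ 2))⁻¹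
      = ∫⁻ t in Set.Ioi (0:ℝ),
        ENNReal.ofReal (Real.exp (-(t * ∑ j, ‖inner ℂ (b j : E) x‖ ^ 2))) :=
    fun x => (aux_lint_exp _ (by positivity)).symm
  simp_rw [h1]
  rw [lintegral_lintegral_swap (by fun_prop)]
  refine setLIntegral_congr_fun measurableSet_Ioi fun t ht => ?_
  exact aux_lint_gauss γ hγ _ _ hb t (le_of_lt ht)
end
section
variable {E : Type*} [NormedAddCommGroup E] [InnerProductSpace ℂ E]

lemma aux_gram_inv [FiniteDimensional ℂ E] {n : ℕ} (v : Fin (n + 1) → E)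
    (hv : LinearIndependent ℂ v) (i : Fin (n + 1)) :
    ((gram ℂ v)⁻¹ i i).re
      = (‖(Submodule.span ℂ (Set.range (fun j => v (i.succAbove j))))ᗮ.starProjection (v i)‖ ^ 2)⁻¹
    := by
  set W := Submodule.span ℂ (Set.range (fun j => v (i.succAbove j))) with hW
  set u := Wᗮ.starProjection (v i) with hu
  have hdet : IsUnit (gram ℂ v).det :=
    (Matrix.det_gram_ne_zero_iff_linearIndependent.2 hv).isUnit
  have huW : u ∈ Wᗮ := Submodule.starProjection_apply_mem _ _
  have hwW : v i - u ∈ W := by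
    have h := Submodule.starProjection_add_starProjection_orthogonal (K := W) (v i)
    rw [hu, sub_eq_of_eq_add h.symm]
    exact Submodule.starProjection_apply_mem _ _
  obtain ⟨c, hc⟩ := (Submodule.mem_span_range_iff_exists_fun ℂ).1 hwW
  let a : Fin (n + 1) → ℂ := i.insertNth (1 : ℂ) (fun j => - c j)
  have ha : ∑ j, a j • v j = u := by
    rw [Fin.sum_univ_succAbove _ i]
    simp only [a, Fin.insertNth_apply_same, Fin.insertNth_apply_succAbove, one_smul, neg_smul,
      Finset.sum_neg_distrib, hc]
    abel
  have hself : inner ℂ (v i) u = ((‖u‖ ^ 2 : ℝ) : ℂ) := by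
    have h0 : inner ℂ (v i - u) u = 0 := huW _ hwW
    rw [inner_sub_left, sub_eq_zero] at h0
    rw [h0, inner_self_eq_norm_sq_to_K]
    simp
  have hG : gram ℂ v *ᵥ a = Pi.single i ((‖u‖ ^ 2 : ℝ) : ℂ) := by
    ext k
    have : (gram ℂ v *ᵥ a) k = inner ℂ (v k) u := by
      rw [← ha, inner_sum]
      simp only [mulVec, dotProduct, gram_apply, inner_smul_right]
      exact Finset.sum_congr rfl fun j _ => mul_comm _ _
    rw [this]
    rcases Fin.eq_self_or_eq_succAbove i k with rfl | ⟨j, rfl⟩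
    · simp [hself]
    · rw [Pi.single_eq_of_ne (Fin.succAbove_ne i j)]
      exact huW _ (Submodule.subset_span ⟨j, rfl⟩)
  have h1 : a = (gram ℂ v)⁻¹ *ᵥ Pi.single i ((‖u‖ ^ 2 : ℝ) : ℂ) := by
    rw [← hG, mulVec_mulVec, nonsing_inv_mul _ hdet, one_mulVec]
  have h2 := congrFun h1 i
  simp only [a, Fin.insertNth_apply_same, mulVec_single, Pi.smul_apply, MulOpposite.smul_eq_mul_unop, MulOpposite.unop_op, col_apply] at h2
  have h3 := congrArg Complex.re h2
  rw [Complex.re_mul_ofReal, Complex.one_re] at h3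
  exact eq_inv_of_mul_eq_one_left h3.symm

variable [MeasurableSpace E] [BorelSpace E] [SecondCountableTopology E]

lemma aux_meas_gram {n : ℕ} (i j : Fin n) :
    Measurable fun v : Fin n → E => gram ℂ v i j := by
  simp only [gram_apply]
  fun_prop

lemma aux_meas_det {Ω : Type*} [MeasurableSpace Ω] {n : ℕ} (A : Ω → Matrix (Fin n) (Fin n) ℂ)
    (hA : ∀ i j, Measurable fun ω => A ω i j) : Measurable fun ω => (A ω).det := by
  simp only [det_apply]
  refine Finset.measurable_fun_sum _ fun σ _ => ?_
  refine Measurable.const_smul ?_ _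
  exact Finset.measurable_fun_prod _ fun i _ => hA _ _

lemma aux_meas_inv {Ω : Type*} [MeasurableSpace Ω] {n : ℕ} (A : Ω → Matrix (Fin n) (Fin n) ℂ)
    (hA : ∀ i j, Measurable fun ω => A ω i j) (i j : Fin n) :
    Measurable fun ω => (A ω)⁻¹ i j := by
  simp only [inv_def, Matrix.smul_apply, Ring.inverse_eq_inv', smul_eq_mul, adjugate_apply]
  refine (aux_meas_det A hA).inv.mul (aux_meas_det _ fun k l => ?_)
  by_cases h : k = j
  · subst h
    simp only [updateRow_self]
    exact measurable_const
  · simp only [updateRow_ne h]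
    exact hA k l

lemma aux_finrank [FiniteDimensional ℂ E] {n : ℕ} (w : Fin n → E) :
    Module.finrank ℂ E ≤ Module.finrank ℂ (Submodule.span ℂ (Set.range w))ᗮ + n := by
  have h1 := (Submodule.span ℂ (Set.range w)).finrank_add_finrank_orthogonal
  have h2 := finrank_range_le_card (R := ℂ) w
  rw [Set.finrank, Fintype.card_fin] at h2
  omega

lemma aux_ae_proj [FiniteDimensional ℂ E] (γ : Measure E) [IsProbabilityMeasure γ]
    (hγ : IsCG γ) (K : Submodule ℂ E) (hd : 2 ≤ Module.finrank ℂ K) :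
    ∀ᵐ x ∂γ, K.starProjection x ≠ 0 := by
  have h := aux_lint_inv γ hγ K hd
  have hm : Measurable fun x => (ENNReal.ofReal (‖K.starProjection x‖ ^ 2))⁻¹ := by fun_prop
  have := ae_lt_top hm (by rw [h]; exact ENNReal.ofReal_ne_top)
  filter_upwards [this] with x hx h0
  simp [h0] at hx

lemma aux_li [FiniteDimensional ℂ E] (γ : Measure E) [IsProbabilityMeasure γ]
    (hγ : IsCG γ) (n : ℕ) (hn : n < Module.finrank ℂ E) :
    ∀ᵐ v ∂(Measure.pi fun _ : Fin n => γ), LinearIndependent ℂ v := by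
  induction n with
  | zero => exact Filter.Eventually.of_forall fun v => linearIndependent_empty_type
  | succ n ih =>
    have hmp := measurePreserving_piFinSuccAbove (fun _ : Fin (n + 1) => γ) 0
    have hs : MeasurableSet {v : Fin (n + 1) → E | LinearIndependent ℂ v} := by
      simp_rw [← Matrix.det_gram_ne_zero_iff_linearIndependent]
      exact (measurableSet_eq_fun (aux_meas_det _ aux_meas_gram) measurable_const).compl
    have key : ∀ᵐ p ∂(γ.prod (Measure.pi fun _ : Fin n => γ)),
        LinearIndependent ℂ ((MeasurableEquiv.piFinSuccAbove (fun _ : Fin (n + 1) => E) 0).symm p)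
        := by
      have hs' := (MeasurableEquiv.piFinSuccAbove
        (fun _ : Fin (n + 1) => E) 0).symm.measurable hs
      rw [← Measure.prod_swap, ae_map_iff measurable_swap.aemeasurable (p := fun p => LinearIndependent ℂ
          ((MeasurableEquiv.piFinSuccAbove (fun _ : Fin (n + 1) => E) 0).symm p)) hs',
        Measure.ae_prod_iff_ae_ae (p := fun x : (Fin n → E) × E => LinearIndependent ℂ
          ((MeasurableEquiv.piFinSuccAbove (fun _ : Fin (n + 1) => E) 0).symm x.swap))
          (measurable_swap hs')]
      filter_upwards [ih (by omega)] with w hw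
      have hK := aux_finrank w
      filter_upwards [aux_ae_proj γ hγ _ (by omega :
        2 ≤ Module.finrank ℂ (Submodule.span ℂ (Set.range w))ᗮ)] with x hx
      change LinearIndependent ℂ ((0 : Fin (n + 1)).insertNth x w)
      rw [Fin.insertNth_zero', linearIndependent_finCons]
      refine ⟨hw, fun hmem => hx ?_⟩
      exact Submodule.starProjection_orthogonal_apply_eq_zero hmem
    have := hmp.quasiMeasurePreserving.ae key
    filter_upwards [this] with v hv
    rwa [MeasurableEquiv.symm_apply_apply] at hv

lemma aux_lint_gram [FiniteDimensional ℂ E] (γ : Measure E) [IsProbabilityMeasure γ]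
    (hγ : IsCG γ) (n : ℕ) (hn : n + 1 < Module.finrank ℂ E) (i : Fin (n + 1)) :
    ∫⁻ v, ENNReal.ofReal ((gram ℂ v)⁻¹ i i).re ∂(Measure.pi fun _ : Fin (n + 1) => γ)
      = ENNReal.ofReal (1 / ((Module.finrank ℂ E : ℝ) - (n + 1))) := by
  have hmp := (measurePreserving_piFinSuccAbove (fun _ : Fin (n + 1) => γ) i).symm
  have hmeas : Measurable fun v : Fin (n + 1) → E => ENNReal.ofReal ((gram ℂ v)⁻¹ i i).re :=
    (Complex.measurable_re.comp (aux_meas_inv _ aux_meas_gram i i)).ennreal_ofReal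
  rw [← hmp.lintegral_comp hmeas,
    lintegral_prod_symm' (fun a => ENNReal.ofReal ((gram ℂ ((MeasurableEquiv.piFinSuccAbove
        (fun _ : Fin (n + 1) => E) i).symm a))⁻¹ i i).re)
      (hmeas.comp (MeasurableEquiv.measurable _))]
  have key : ∀ᵐ w ∂(Measure.pi fun _ : Fin n => γ),
      ∫⁻ x, ENNReal.ofReal ((gram ℂ ((MeasurableEquiv.piFinSuccAbove
        (fun _ : Fin (n + 1) => E) i).symm (x, w)))⁻¹ i i).re ∂γ
      = ENNReal.ofReal (1 / ((Module.finrank ℂ E : ℝ) - (n + 1))) := by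
    filter_upwards [aux_li γ hγ n (by omega)] with w hw
    have h1 := (Submodule.span ℂ (Set.range w)).finrank_add_finrank_orthogonal
    rw [finrank_span_eq_card hw, Fintype.card_fin] at h1
    have h2 : 2 ≤ Module.finrank ℂ (Submodule.span ℂ (Set.range w))ᗮ := by omega
    have h3 : (Module.finrank ℂ E : ℝ) - (n + 1)
        = (Module.finrank ℂ (Submodule.span ℂ (Set.range w))ᗮ : ℝ) - 1 := by
      rw [← h1]; push_cast; ring
    rw [h3, ← aux_lint_inv γ hγ _ h2]
    refine lintegral_congr_ae ?_
    filter_upwards [aux_ae_proj γ hγ _ h2] with x hx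
    change ENNReal.ofReal ((gram ℂ (i.insertNth x w : Fin (n + 1) → E))⁻¹ i i).re = _
    have hli : LinearIndependent ℂ (i.insertNth x w : Fin (n + 1) → E) := by
      have h4 : LinearIndependent ℂ (Fin.cons x w : Fin (n + 1) → E) := by
        rw [linearIndependent_finCons]
        exact ⟨hw, fun hmem => hx (Submodule.starProjection_orthogonal_apply_eq_zero hmem)⟩
      rw [← linearIndependent_equiv i.cycleRange.symm]
      convert h4 using 1
      ext1 j
      exact Fin.insertNth_apply_cycleRange_symm i x w j
    rw [aux_gram_inv _ hli i]
    simp only [Fin.insertNth_apply_same, Fin.insertNth_apply_succAbove]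
    rw [ENNReal.ofReal_inv_of_pos (by positivity)]
  rw [lintegral_congr_ae key]
  simp
end

/-- real coordinates to a complex vector -/
noncomputable def toCx (L : ℕ) (y : Fin L × Bool → ℝ) : EuclideanSpace ℂ (Fin L) :=
  WithLp.toLp 2 fun j => (⟨y (j, true), y (j, false)⟩ : ℂ)

lemma measurable_mkC {α : Type*} [MeasurableSpace α] {f g : α → ℝ} (hf : Measurable f)
    (hg : Measurable g) : Measurable fun a => (⟨f a, g a⟩ : ℂ) :=
  Complex.measurableEquivRealProd.symm.measurable.comp (hf.prodMk hg)

lemma measurable_toCx (L : ℕ) : Measurable (toCx L) := by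
  refine (WithLp.measurable_toLp 2 _).comp (measurable_pi_lambda _ fun j => ?_)
  exact measurable_mkC (measurable_pi_apply _) (measurable_pi_apply _)

noncomputable def gam (L : ℕ) : Measure (EuclideanSpace ℂ (Fin L)) :=
  (Measure.pi fun _ : Fin L × Bool => gaussianReal 0 (1 / 2 : ℝ≥0)).map (toCx L)

instance (L : ℕ) : IsProbabilityMeasure (gam L) :=
  Measure.isProbabilityMeasure_map (measurable_toCx L).aemeasurable

lemma isCG_gam (L : ℕ) : IsCG (gam L) := by
  intro t
  rw [gam, integral_map (measurable_toCx L).aemeasurable (by fun_prop)]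
  let s : Fin L × Bool → ℝ := fun p => if p.2 then (t p.1).re else (t p.1).im
  have h1 : ∀ y, Complex.exp ((((inner ℂ (toCx L y) t).re : ℝ) : ℂ) * Complex.I)
      = ∏ p, Complex.exp ((y p * s p : ℝ) * Complex.I) := by
    intro y
    rw [← Complex.exp_sum, ← Finset.sum_mul, PiLp.inner_apply, Complex.re_sum,
      ← Complex.ofReal_sum, Fintype.sum_prod_type]
    congr 3
    refine Finset.sum_congr rfl fun j _ => ?_
    simp [s, toCx]
    ring
  simp_rw [h1]
  rw [integral_fintype_prod_eq_prod (fun p (x : ℝ) => Complex.exp ((x * s p : ℝ) * Complex.I))]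
  have h2 : ∀ p, ∫ x : ℝ, Complex.exp ((x * s p : ℝ) * Complex.I)
      ∂(gaussianReal 0 (1 / 2 : ℝ≥0)) = Complex.exp (-((s p ^ 2 : ℝ) : ℂ) / 4) := by
    intro p
    have := charFun_gaussianReal (μ := 0) (v := (1 / 2 : ℝ≥0)) (s p)
    rw [charFun_apply_real] at this
    convert this using 2
    · ext x; congr 1; push_cast; ring
    · push_cast; ring
  simp_rw [h2]
  rw [← Complex.exp_sum, EuclideanSpace.norm_sq_eq]
  congr 1
  rw [← Finset.sum_div, Finset.sum_neg_distrib, ← Complex.ofReal_sum, Fintype.sum_prod_type]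
  have h3 : ∑ j, ∑ b, s (j, b) ^ 2 = ∑ j, ‖t j‖ ^ 2 := by
    refine Finset.sum_congr rfl fun j _ => ?_
    rw [Complex.sq_norm, Complex.normSq_apply]
    simp [s]; ring
  rw [h3]

lemma pi_flat (Q L : ℕ) :
    (Measure.pi fun _ : Fin Q => Measure.pi fun _ : Fin L × Bool => gaussianReal 0 (1 / 2 : ℝ≥0)).map
      (fun z (p : (Fin Q × Fin L) × Bool) => z p.1.1 (p.1.2, p.2))
    = Measure.pi fun _ => gaussianReal 0 (1 / 2 : ℝ≥0) := by
  symm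
  refine Measure.pi_eq fun s hs => ?_
  rw [Measure.map_apply (by fun_prop) (MeasurableSet.univ_pi hs)]
  have : (fun (z : Fin Q → Fin L × Bool → ℝ) (p : (Fin Q × Fin L) × Bool) => z p.1.1 (p.1.2, p.2))
      ⁻¹' (Set.univ.pi s)
      = Set.univ.pi fun q => Set.univ.pi fun r : Fin L × Bool => s ((q, r.1), r.2) := by
    ext z
    simp [Set.mem_pi]
  rw [this, Measure.pi_pi]
  simp_rw [Measure.pi_pi]
  simp only [Fintype.prod_prod_type]

lemma rows_law {Ω : Type*} [MeasurableSpace Ω] (P : Measure Ω) [IsProbabilityMeasure P]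
    (Q L : ℕ) 
    (H : Ω → Matrix (Fin Q) (Fin L) ℂ) (hmeas : ∀ i j, Measurable fun ω => H ω i j)
    (hgauss : IsStdComplexGaussianFamily P
      (fun p : Fin Q × Fin L => fun ω => H ω p.1 p.2)) :
    MeasurePreserving (fun ω q => (WithLp.toLp 2 (H ω q) : EuclideanSpace ℂ (Fin L))) P
      (Measure.pi fun _ => gam L) := by
  have hm : Measurable (fun ω q => (WithLp.toLp 2 (H ω q) : EuclideanSpace ℂ (Fin L))) := by
    refine measurable_pi_lambda _ fun q => ?_
    exact (WithLp.measurable_toLp 2 _).comp (measurable_pi_lambda _ fun j => hmeas q j)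
  refine ⟨hm, ?_⟩
  obtain ⟨hind, hlaw⟩ := hgauss
  have hX : ∀ p : (Fin Q × Fin L) × Bool, Measurable (fun ω =>
      if p.2 then (H ω p.1.1 p.1.2).re else (H ω p.1.1 p.1.2).im) := by
    rintro ⟨⟨q, l⟩, b⟩
    have := hmeas q l
    cases b
    · exact Complex.measurable_im.comp this
    · exact Complex.measurable_re.comp this
  rw [iIndepFun_iff_map_fun_eq_pi_map fun p => (hX p).aemeasurable] at hind
  simp_rw [hlaw] at hind
  rw [← pi_flat] at hind
  let R : ((Fin Q × Fin L) × Bool → ℝ) → Fin Q → EuclideanSpace ℂ (Fin L) :=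
    fun y q => toCx L fun r => y ((q, r.1), r.2)
  have hR : Measurable R := by
    refine measurable_pi_lambda _ fun q => (measurable_toCx L).comp ?_
    fun_prop
  have h2 := congrArg (Measure.map R) hind
  rw [Measure.map_map hR (measurable_pi_lambda _ hX), Measure.map_map hR (by fun_prop)] at h2
  have h3 := Measure.pi_map_pi (μ := fun _ : Fin Q => Measure.pi fun _ : Fin L × Bool =>
    gaussianReal 0 (1 / 2 : ℝ≥0)) (f := fun _ => toCx L)
    (fun _ => (measurable_toCx L).aemeasurable)
  exact h2.trans h3

/-- For `Q < L` and `H` a `Q×L` matrix of i.i.d. standard complex Gaussians,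
`H Hᴴ` is almost surely invertible and `E[Tr((H Hᴴ)⁻¹)] = Q/(L - Q)`. -/
theorem stmt_3 {Ω : Type*} [MeasurableSpace Ω] (P : Measure Ω) [IsProbabilityMeasure P]
    (Q L : ℕ) (hQ : 1 ≤ Q) (hQL : Q < L)
    (H : Ω → Matrix (Fin Q) (Fin L) ℂ) (hmeas : ∀ i j, Measurable fun ω => H ω i j)
    (hgauss : IsStdComplexGaussianFamily P
      (fun p : Fin Q × Fin L => fun ω => H ω p.1 p.2)) :
    (∀ᵐ ω ∂P, IsUnit (H ω * (H ω)ᴴ)) ∧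
    (∫ ω, (Matrix.trace ((H ω * (H ω)ᴴ)⁻¹)).re ∂P = (Q : ℝ) / ((L : ℝ) - Q)) := by
  have hmp := rows_law P Q L H hmeas hgauss
  set X : Ω → Fin Q → EuclideanSpace ℂ (Fin L) := fun ω q => WithLp.toLp 2 (H ω q) with hXdef
  have hfr : Module.finrank ℂ (EuclideanSpace ℂ (Fin L)) = L := by simp
  have hgram : ∀ ω, H ω * (H ω)ᴴ = (gram ℂ (X ω))ᵀ := by
    intro ω
    ext a b
    simp [Matrix.mul_apply, gram_apply, PiLp.inner_apply, hXdef]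
  have hli := aux_li (gam L) (isCG_gam L) Q (by rw [hfr]; exact hQL)
  have hli' : ∀ᵐ ω ∂P, LinearIndependent ℂ (X ω) := hmp.quasiMeasurePreserving.ae hli
  refine ⟨?_, ?_⟩
  · filter_upwards [hli'] with ω hω
    rw [hgram, Matrix.isUnit_iff_isUnit_det, det_transpose]
    exact (Matrix.det_gram_ne_zero_iff_linearIndependent.2 hω).isUnit
  · obtain ⟨n, rfl⟩ : ∃ n, Q = n + 1 := ⟨Q - 1, by omega⟩
    have hpos : (0:ℝ) < (L : ℝ) - (n + 1) := by
      have : ((n + 1 : ℕ) : ℝ) < L := by exact_mod_cast hQL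
      push_cast at this; linarith
    have hmi : ∀ i, Measurable fun ω => ((gram ℂ (X ω))⁻¹ i i).re := fun i =>
      (Complex.measurable_re.comp (aux_meas_inv _ aux_meas_gram i i)).comp hmp.measurable
    have hlint : ∀ i, ∫⁻ ω, ENNReal.ofReal ((gram ℂ (X ω))⁻¹ i i).re ∂P
        = ENNReal.ofReal (1 / ((L : ℝ) - (n + 1))) := by
      intro i
      have h := aux_lint_gram (gam L) (isCG_gam L) n (by rw [hfr]; exact hQL) i
      rw [hfr] at h
      rw [← h]
      exact hmp.lintegral_comp
        (Complex.measurable_re.comp (aux_meas_inv _ aux_meas_gram i i)).ennreal_ofReal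
    have hnn : ∀ i, 0 ≤ᵐ[P] fun ω => ((gram ℂ (X ω))⁻¹ i i).re := by
      intro i
      filter_upwards [hli'] with ω hω
      change (0:ℝ) ≤ _
      rw [aux_gram_inv _ hω i]
      positivity
    have hint : ∀ i, Integrable (fun ω => ((gram ℂ (X ω))⁻¹ i i).re) P := by
      intro i
      refine ⟨(hmi i).aestronglyMeasurable, ?_⟩
      rw [hasFiniteIntegral_iff_ofReal (hnn i), hlint i]
      exact ENNReal.ofReal_lt_top
    have hval : ∀ i, ∫ ω, ((gram ℂ (X ω))⁻¹ i i).re ∂P = 1 / ((L : ℝ) - (n + 1)) := by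
      intro i
      rw [integral_eq_lintegral_of_nonneg_ae (hnn i) (hmi i).aestronglyMeasurable, hlint i,
        ENNReal.toReal_ofReal (by positivity)]
    have htr : ∀ ω, (Matrix.trace ((H ω * (H ω)ᴴ)⁻¹)).re
        = ∑ i, ((gram ℂ (X ω))⁻¹ i i).re := by
      intro ω
      rw [hgram, ← transpose_nonsing_inv, trace_transpose, trace, Complex.re_sum]
      rfl
    simp_rw [htr]
    rw [integral_finsetSum _ fun i _ => hint i]
    simp_rw [hval]
    simp
    ring
end
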